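/- arXiv:1603.08750 — 3 statements merged into one kernel-verified Lean document; each statement's English description precedes it below -/
import Mathlib

section
/- For every λ > 0 there exists a unique C³ function r : T → ℝ satisfying the kernel equation r_{xxx} + r_{yyy} + r_x + r_y = −λr on T together with the boundary conditions r(x,x) = 0 and r_x(x,x) = (λ/3)x for all x ∈ [0,1], and r(0,y) = 0 for all y ∈ [0,1]. -/
open MeasureTheory

noncomputable section

/-- The closed triangle `T = {(x, y) : 0 ≤ x ≤ y ≤ 1}`. -/
def T : Set (ℝ × ℝ) := {q : ℝ × ℝ | 0 ≤ q.1 ∧ q.1 ≤ q.2 ∧ q.2 ≤ 1}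

/-- Partial derivative in the first variable. -/
def pdx (f : ℝ → ℝ → ℝ) (x y : ℝ) : ℝ := deriv (fun x' => f x' y) x

/-- Partial derivative in the second variable. -/
def pdy (f : ℝ → ℝ → ℝ) (x y : ℝ) : ℝ := deriv (fun y' => f x y') y

/-- The inverse observer kernel for `lam`: a C³ function with
`r_xxx + r_yyy + r_x + r_y = -lam r` on `T`, `r(x,x)=0`, `r_x(x,x) = (lam/3)x`,
`r(0,y)=0`. -/
def IsInverseObserverKernel (lam : ℝ) (r : ℝ → ℝ → ℝ) : Prop :=
  ContDiff ℝ 3 (Function.uncurry r) ∧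
  (∀ x y : ℝ, (x, y) ∈ T →
    pdx (pdx (pdx r)) x y + pdy (pdy (pdy r)) x y + pdx r x y + pdy r x y = -lam * r x y) ∧
  (∀ x ∈ Set.Icc (0:ℝ) 1, r x x = 0) ∧
  (∀ x ∈ Set.Icc (0:ℝ) 1, pdx r x x = lam / 3 * x) ∧
  (∀ y ∈ Set.Icc (0:ℝ) 1, r 0 y = 0)

lemma exists_fixedPoint_closedBall {R : Type*} [NormedAddCommGroup R] [CompleteSpace R]
    {ρ : ℝ} (hρ : 0 ≤ ρ) (f : R → R) (hball : ∀ x, ‖x‖ ≤ ρ → ‖f x‖ ≤ ρ)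
    (hlip : ∀ x y, ‖x‖ ≤ ρ → ‖y‖ ≤ ρ → ‖f x - f y‖ ≤ 1 / 2 * ‖x - y‖) :
    ∃ x, ‖x‖ ≤ ρ ∧ f x = x := by
  have hs : IsComplete (Metric.closedBall (0 : R) ρ) := Metric.isClosed_closedBall.isComplete
  have hm : Set.MapsTo f (Metric.closedBall (0 : R) ρ) (Metric.closedBall (0 : R) ρ) := by
    intro x hx
    rw [mem_closedBall_zero_iff] at *
    exact hball x hx
  have hc : ContractingWith (1 / 2) (hm.restrict f _ _) := by
    refine ⟨by rw [← NNReal.coe_lt_coe]; norm_num, LipschitzWith.of_dist_le_mul ?_⟩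
    rintro ⟨x, hx⟩ ⟨y, hy⟩
    rw [mem_closedBall_zero_iff] at hx hy
    have := hlip x y hx hy
    simpa [Subtype.dist_eq, dist_eq_norm] using this
  obtain ⟨x, hx, hfx, -⟩ := hc.exists_fixedPoint' hs hm (x := 0) (by simpa using hρ)
    (edist_ne_top _ _)
  exact ⟨x, by simpa using hx, hfx⟩

/-- A factorization of the cubic `j² X³ + (3 + j²) X + (lam / 2) j²` as
`(X - A) (j X - Y₁) (j X - Y₂)`, where `Y₁ = i√3 + j β₁` and `Y₂ = -i√3 + j β₂`. -/
lemma exists_cubic_factorization {R : Type*} [NormedCommRing R] [NormedAlgebra ℂ R]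
    [NormOneClass R] [CompleteSpace R] {lam : ℝ} (hlam : 0 < lam) {j : R} (hj : ‖j‖ ≤ 1 / 2)
    (hjl : ‖j‖ * lam ≤ 1 / 2) :
    ∃ A β₁ β₂ Y₁ Y₂ : R, ‖A‖ ≤ 1 / 4 ∧
      Y₁ = algebraMap ℂ R (Complex.I * √3) + j * β₁ ∧
      Y₂ = algebraMap ℂ R (-(Complex.I * √3)) + j * β₂ ∧
      Y₁ + Y₂ = -(A * j) ∧ Y₁ * Y₂ - A ^ 2 * j ^ 2 = 3 + j ^ 2 ∧
      A * (Y₁ * Y₂) = -(algebraMap ℂ R (lam / 2) * j ^ 2) := by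
  have hj0 := norm_nonneg j
  have hj2 : ‖j ^ 2‖ ≤ ‖j‖ ^ 2 := norm_pow_le j 2
  have hj6 : ‖j ^ 6‖ ≤ ‖j‖ ^ 6 := norm_pow_le j 6
  have hsq : ‖j‖ ^ 2 ≤ 1 / 4 := by nlinarith
  have hsqsq : ‖j‖ ^ 4 ≤ 1 / 16 := by nlinarith
  have hl2 : ‖j‖ ^ 6 * lam ^ 2 ≤ 1 / 64 := by
    have h1 : (‖j‖ * lam) ^ 2 ≤ 1 / 4 := by nlinarith [mul_nonneg hj0 hlam.le]
    calc ‖j‖ ^ 6 * lam ^ 2 = ‖j‖ ^ 4 * (‖j‖ * lam) ^ 2 := by ring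
      _ ≤ 1 / 16 * (1 / 4) := by gcongr
      _ = _ := by norm_num
  have hn3 : ‖algebraMap ℂ R (-1 / 3)‖ = 1 / 3 := by
    rw [norm_algebraMap']; norm_num
  have hnl : ‖algebraMap ℂ R (lam / 2)‖ = lam / 2 := by
    rw [norm_algebraMap', norm_div, Complex.norm_real, Real.norm_of_nonneg hlam.le]; norm_num
  have h3 : algebraMap ℂ R (-1 / 3) * 3 = -1 := by
    rw [← map_ofNat (algebraMap ℂ R) 3, ← map_mul]; norm_num
  obtain ⟨a, ha, haf⟩ := exists_fixedPoint_closedBall hlam.le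
    (fun a : R => algebraMap ℂ R (-1 / 3) * (algebraMap ℂ R (lam / 2) + j ^ 2 * a + j ^ 6 * a ^ 3))
    (by
      intro x hx
      have hx3 : ‖x ^ 3‖ ≤ lam ^ 3 := (norm_pow_le x 3).trans (by gcongr)
      calc _ ≤ 1 / 3 * (lam / 2 + ‖j‖ ^ 2 * lam + ‖j‖ ^ 6 * lam ^ 3) := by
            refine (norm_mul_le _ _).trans ?_
            rw [hn3]
            gcongr
            refine (norm_add₃_le).trans ?_
            rw [hnl]
            gcongr
            · exact (norm_mul_le _ _).trans (by gcongr)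
            · exact (norm_mul_le _ _).trans (by gcongr)
        _ ≤ lam := by nlinarith)
    (by
      intro x y hx hy
      have hfac : algebraMap ℂ R (-1 / 3) *
            (algebraMap ℂ R (lam / 2) + j ^ 2 * x + j ^ 6 * x ^ 3) -
          algebraMap ℂ R (-1 / 3) * (algebraMap ℂ R (lam / 2) + j ^ 2 * y + j ^ 6 * y ^ 3) =
          algebraMap ℂ R (-1 / 3) *
            ((j ^ 2 + j ^ 6 * (x * x + x * y + y * y)) * (x - y)) := by ring
      have hq : ‖x * x + x * y + y * y‖ ≤ 3 * lam ^ 2 := by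
        refine norm_add₃_le.trans ?_
        have h1 := (norm_mul_le x x).trans (mul_le_mul hx hx (norm_nonneg _) hlam.le)
        have h2 := (norm_mul_le x y).trans (mul_le_mul hx hy (norm_nonneg _) hlam.le)
        have h4 := (norm_mul_le y y).trans (mul_le_mul hy hy (norm_nonneg _) hlam.le)
        nlinarith
      rw [hfac]
      calc _ ≤ 1 / 3 * ((‖j‖ ^ 2 + ‖j‖ ^ 6 * (3 * lam ^ 2)) * ‖x - y‖) := by
            refine (norm_mul_le _ _).trans ?_
            rw [hn3]
            gcongr
            refine (norm_mul_le _ _).trans ?_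
            gcongr
            refine (norm_add_le _ _).trans ?_
            gcongr
            exact (norm_mul_le _ _).trans (by gcongr)
        _ ≤ _ := by nlinarith [norm_nonneg (x - y)])
  have ha' : 3 * a + j ^ 2 * a + j ^ 6 * a ^ 3 = -algebraMap ℂ R (lam / 2) := by
    have := congrArg (fun x => 3 * x) haf
    linear_combination (-1 : R) * this +
      (algebraMap ℂ R (lam / 2) + j ^ 2 * a + j ^ 6 * a ^ 3) * h3
  have hA : ‖j ^ 2 * a‖ ≤ 1 / 4 := by
    calc _ ≤ ‖j‖ ^ 2 * lam := (norm_mul_le _ _).trans (by gcongr)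
      _ ≤ 1 / 4 := by nlinarith
  set A := j ^ 2 * a with hAdef
  have hA2 : ‖A ^ 2‖ ≤ 1 := (norm_pow_le A 2).trans (by nlinarith [norm_nonneg A])
  set e : R := algebraMap ℂ R (1 / 3) + algebraMap ℂ R (1 / 4) * A ^ 2 with he
  have hen : ‖e‖ ≤ 1 := by
    calc ‖e‖ ≤ 1 / 3 + 1 / 4 * 1 := by
          refine (norm_add_le _ _).trans ?_
          gcongr
          · rw [norm_algebraMap']; norm_num
          · refine (norm_mul_le _ _).trans ?_
            gcongr
            rw [norm_algebraMap']; norm_num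
      _ ≤ 1 := by norm_num
  have hn2 : ‖algebraMap ℂ R (1 / 2)‖ = 1 / 2 := by
    rw [norm_algebraMap']; norm_num
  obtain ⟨b, hb, hbf⟩ := exists_fixedPoint_closedBall (zero_le_one' ℝ)
    (fun b : R => algebraMap ℂ R (1 / 2) * (j * (e - b ^ 2)))
    (by
      intro x hx
      have hx2 : ‖x ^ 2‖ ≤ 1 ^ 2 := (norm_pow_le x 2).trans (by gcongr)
      calc ‖algebraMap ℂ R (1 / 2) * (j * (e - x ^ 2))‖ ≤ 1 / 2 * (1 / 2 * (1 + 1 ^ 2)) := by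
            refine (norm_mul_le _ _).trans ?_
            rw [hn2]
            gcongr
            refine (norm_mul_le _ _).trans ?_
            gcongr
            exact (norm_sub_le _ _).trans (by gcongr)
        _ ≤ 1 := by norm_num)
    (by
      intro x y hx hy
      have hfac : algebraMap ℂ R (1 / 2) * (j * (e - x ^ 2)) -
          algebraMap ℂ R (1 / 2) * (j * (e - y ^ 2)) =
          algebraMap ℂ R (1 / 2) * (j * (-(x + y) * (x - y))) := by ring
      rw [hfac]
      calc _ ≤ 1 / 2 * (1 / 2 * ((1 + 1) * ‖x - y‖)) := by
            refine (norm_mul_le _ _).trans ?_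
            rw [hn2]
            gcongr
            refine (norm_mul_le _ _).trans ?_
            gcongr
            refine (norm_mul_le _ _).trans ?_
            rw [norm_neg]
            gcongr
            exact (norm_add_le _ _).trans (by gcongr)
        _ ≤ _ := by linarith)
  have hm2 : algebraMap ℂ R (1 / 2) * 2 = 1 := by
    rw [← map_ofNat (algebraMap ℂ R) 2, ← map_mul]; norm_num
  have hb' : 2 * b + j * b ^ 2 = j * e := by
    have := congrArg (fun x => 2 * x) hbf
    linear_combination (-1 : R) * this + (j * (e - b ^ 2)) * hm2
  have he3 : 3 * e = 1 + 3 * algebraMap ℂ R (1 / 4) * A ^ 2 := by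
    have h1 : (3 : R) * algebraMap ℂ R (1 / 3) = 1 := by
      rw [← map_ofNat (algebraMap ℂ R) 3, ← map_mul]; norm_num
    rw [he]
    linear_combination h1
  have h4 : (4 : R) * algebraMap ℂ R (1 / 4) = 1 := by
    rw [← map_ofNat (algebraMap ℂ R) 4, ← map_mul]; norm_num
  have hhalf : algebraMap ℂ R (1 / 2) ^ 2 = algebraMap ℂ R (1 / 4) := by
    rw [← map_pow]; norm_num
  set c : R := algebraMap ℂ R (Complex.I * √3) with hc
  have hc2 : c ^ 2 = -3 := by
    rw [hc, ← map_pow, mul_pow, Complex.I_sq, ← Complex.ofReal_pow, Real.sq_sqrt (by norm_num)]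
    simp [map_ofNat]
  have hprod : (c + j * (-(algebraMap ℂ R (1 / 2) * A) + c * b)) *
      (-c + j * (-(algebraMap ℂ R (1 / 2) * A) - c * b)) = 3 + j ^ 2 + A ^ 2 * j ^ 2 := by
    linear_combination (-(1 + j * b) ^ 2) * hc2 + j ^ 2 * A ^ 2 * hhalf + 3 * j * hb' +
      j ^ 2 * he3 +
      j ^ 2 * A ^ 2 * h4
  refine ⟨A, -(algebraMap ℂ R (1 / 2) * A) + c * b, -(algebraMap ℂ R (1 / 2) * A) - c * b,
    _, _, hA, rfl, rfl, ?_, ?_, ?_⟩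
  · rw [map_neg]
    linear_combination (-(A * j)) * hm2
  · rw [map_neg, hprod]; ring
  · rw [map_neg, hprod]
    linear_combination j ^ 2 * ha' +
      (3 + j ^ 2 + j ^ 2 * (A ^ 2 + A * (j ^ 2 * a) + (j ^ 2 * a) ^ 2)) * hAdef

open Set Filter Topology Asymptotics in
/-- The Volterra operator `f ↦ ∫₀ᵗ f` on `C([0,1], ℂ)`. -/
def volterra : C(unitInterval, ℂ) →L[ℂ] C(unitInterval, ℂ) :=
  LinearMap.mkContinuous
    { toFun := fun f =>
        ⟨fun t => ∫ x in (0 : ℝ)..t, f (projIcc 0 1 zero_le_one x), by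
          have hc : Continuous fun x : ℝ => f (projIcc 0 1 zero_le_one x) :=
            f.continuous.comp continuous_projIcc
          exact (intervalIntegral.continuous_primitive
            (fun a b => hc.intervalIntegrable a b) 0).comp continuous_subtype_val⟩
      map_add' := fun f g => by
        ext t
        have hc (f : C(unitInterval, ℂ)) : Continuous fun x : ℝ => f (projIcc 0 1 zero_le_one x) :=
          f.continuous.comp continuous_projIcc
        exact intervalIntegral.integral_add ((hc f).intervalIntegrable _ _)
          ((hc g).intervalIntegrable _ _)
      map_smul' := fun c f => by
        ext t
        exact intervalIntegral.integral_smul c _ }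
    1 (fun f => by
      rw [ContinuousMap.norm_le _ (by positivity)]
      intro t
      refine (intervalIntegral.norm_integral_le_of_norm_le_const
        (C := ‖f‖) fun x _ => f.norm_coe_le_norm _).trans ?_
      rw [sub_zero, abs_of_nonneg t.2.1, one_mul]
      exact mul_le_of_le_one_right (norm_nonneg f) t.2.2)

lemma volterra_apply (f : C(unitInterval, ℂ)) (t : unitInterval) :
    volterra f t = ∫ x in (0 : ℝ)..t, f (Set.projIcc 0 1 zero_le_one x) := rfl

lemma norm_volterra_le : ‖volterra‖ ≤ 1 := LinearMap.mkContinuous_norm_le _ zero_le_one _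

lemma hasDerivAt_of_volterra_eq {f f' : C(unitInterval, ℂ)} {c : ℂ} (hc : c ≠ 0)
    (h : volterra f' = c • f) (h0 : f' 0 = 0) {τ : ℝ} (hτ : τ < 1) :
    HasDerivAt (fun x => f (Set.projIcc 0 1 zero_le_one x))
      (c⁻¹ * f' (Set.projIcc 0 1 zero_le_one τ)) τ := by
  have hcont : Continuous fun x : ℝ => f' (Set.projIcc 0 1 zero_le_one x) :=
    f'.continuous.comp continuous_projIcc
  have hprim := (hcont.integral_hasStrictDerivAt 0 τ).hasDerivAt.const_mul c⁻¹
  refine hprim.congr_of_eventuallyEq ?_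
  filter_upwards [Iio_mem_nhds hτ] with x hx
  have hval : f (Set.projIcc 0 1 zero_le_one x) =
      c⁻¹ * volterra f' (Set.projIcc 0 1 zero_le_one x) := by
    rw [h]; simp [hc]
  rw [hval, volterra_apply]
  congr 1
  rcases le_total 0 x with hx0 | hx0
  · rw [Set.projIcc_of_mem zero_le_one ⟨hx0, (Set.mem_Iio.1 hx).le⟩]
  · rw [Set.projIcc_of_le_left zero_le_one hx0]
    symm
    simp only [intervalIntegral.integral_same]
    rw [intervalIntegral.integral_symm, intervalIntegral.integral_congr (g := fun _ => 0)]
    · simp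
    · intro y hy
      rw [Set.uIcc_of_le hx0] at hy
      simp only [Set.projIcc_of_le_left zero_le_one hy.2]
      exact h0

open Asymptotics Filter Topology in
/-- If `W` is differentiable into `C([0,1], ℂ)` and `∂ₜ W = (iμ)⁻¹ ∂ₛ W`, `W(s, 0) = 0`, then `W`
extends by zero to a holomorphic function of `s - i t / μ`. -/
lemma hasDerivAt_eval_of_volterra_eq {W W' : ℝ → C(unitInterval, ℂ)} {α β μ : ℝ} (hμ : μ ≠ 0)
    (hW : ∀ s ∈ Set.Ioo α β, HasDerivAt W (W' s) s)
    (h : ∀ s ∈ Set.Ioo α β, volterra (W' s) = (Complex.I * μ) • W s) {z : ℂ}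
    (hz : z.re ∈ Set.Ioo α β) (hz1 : -μ * z.im < 1) :
    HasDerivAt (fun z : ℂ => W z.re (Set.projIcc 0 1 zero_le_one (-μ * z.im)))
      (W' z.re (Set.projIcc 0 1 zero_le_one (-μ * z.im))) z := by
  have hc : Complex.I * μ ≠ 0 := mul_ne_zero Complex.I_ne_zero (by exact_mod_cast hμ)
  have hbot : ∀ s ∈ Set.Ioo α β, W s 0 = 0 := by
    intro s hs
    have h1 := congrArg (fun f : C(unitInterval, ℂ) => f 0) (h s hs)
    simp only [volterra_apply, Set.Icc.coe_zero, intervalIntegral.integral_same,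
      ContinuousMap.smul_apply, smul_eq_mul] at h1
    exact (mul_eq_zero.1 h1.symm).resolve_left hc
  have hbot' : W' z.re 0 = 0 := by
    have h1 : HasDerivAt (fun s => W s 0) (W' z.re 0) z.re :=
      HasFDerivAt.comp_hasDerivAt z.re
        (l := (ContinuousMap.evalCLM ℂ (0 : unitInterval)).restrictScalars ℝ)
        (ContinuousLinearMap.hasFDerivAt _) (hW _ hz)
    have h2 : (fun s => W s 0) =ᶠ[𝓝 z.re] fun _ => 0 := by
      filter_upwards [isOpen_Ioo.mem_nhds hz] with s hs using hbot s hs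
    exact h1.unique ((hasDerivAt_const z.re (0 : ℂ)).congr_of_eventuallyEq h2)
  set π : ℝ → unitInterval := Set.projIcc 0 1 zero_le_one with hπ
  have hπc : Continuous π := continuous_projIcc
  have hre : (fun w : ℂ => w.re - z.re) =O[𝓝 z] fun w => w - z :=
    IsBigO.of_bound 1 (Eventually.of_forall fun w => by
      simpa using Complex.abs_re_le_norm (w - z))
  have him : (fun w : ℂ => -μ * w.im - -μ * z.im) =O[𝓝 z] fun w => w - z :=
    IsBigO.of_bound |μ| (Eventually.of_forall fun w => by
      rw [← mul_sub, norm_mul, norm_neg, Real.norm_eq_abs]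
      gcongr
      simpa using Complex.abs_im_le_norm (w - z))
  have hret : Tendsto (fun w : ℂ => w.re) (𝓝 z) (𝓝 z.re) := Complex.continuous_re.continuousAt
  have himt : Tendsto (fun w : ℂ => -μ * w.im) (𝓝 z) (𝓝 (-μ * z.im)) :=
    (continuous_const.mul Complex.continuous_im).continuousAt
  have h1 : (fun w : ℂ => (W w.re - W z.re - (w.re - z.re) • W' z.re) (π (-μ * w.im)))
      =o[𝓝 z] fun w => w - z := by
    have := ((hasDerivAt_iff_isLittleO.1 (hW _ hz)).comp_tendsto hret).trans_isBigO hre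
    refine IsBigO.trans_isLittleO (IsBigO.of_bound 1 (Eventually.of_forall fun w => ?_)) this
    rw [one_mul]
    exact ContinuousMap.norm_coe_le_norm _ _
  have h2 : (fun w : ℂ => ((w.re - z.re : ℝ) : ℂ) *
      (W' z.re (π (-μ * w.im)) - W' z.re (π (-μ * z.im)))) =o[𝓝 z] fun w => w - z := by
    have hlim : (fun w : ℂ => W' z.re (π (-μ * w.im)) - W' z.re (π (-μ * z.im)))
        =o[𝓝 z] fun _ => (1 : ℂ) := by
      rw [isLittleO_one_iff, tendsto_sub_nhds_zero_iff]
      exact (((W' z.re).continuous.comp hπc).tendsto (-μ * z.im)).comp himt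
    have hre' : (fun w : ℂ => ((w.re - z.re : ℝ) : ℂ)) =O[𝓝 z] fun w => w - z :=
      IsBigO.of_norm_left (by simpa only [Complex.norm_real] using hre.norm_left)
    simpa using hre'.mul_isLittleO hlim
  have h3 : (fun w : ℂ => W z.re (π (-μ * w.im)) - W z.re (π (-μ * z.im)) -
      (-μ * w.im - -μ * z.im) • ((Complex.I * μ)⁻¹ * W' z.re (π (-μ * z.im))))
      =o[𝓝 z] fun w => w - z :=
    ((hasDerivAt_iff_isLittleO.1 (hasDerivAt_of_volterra_eq hc (h _ hz) hbot' hz1)).comp_tendsto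
      himt).trans_isBigO him
  rw [hasDerivAt_iff_isLittleO]
  refine ((h1.add h2).add h3).congr_left fun w => ?_
  have hw : (w - z) = ((w.re - z.re : ℝ) : ℂ) + ((w.im - z.im : ℝ) : ℂ) * Complex.I := by
    apply Complex.ext <;> simp
  have hμ' : (μ : ℂ) ≠ 0 := by exact_mod_cast hμ
  simp only [ContinuousMap.sub_apply, ContinuousMap.smul_apply, Complex.real_smul, smul_eq_mul, hw]
  push_cast
  rw [mul_inv, Complex.inv_I]
  field_simp
  ring

/-- The Cauchy problem for the Cauchy-Riemann equation with zero data has only the zero solution. -/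
lemma eq_zero_of_volterra_eq {W W' : ℝ → C(unitInterval, ℂ)} {α β μ : ℝ} (hμ : μ ≠ 0)
    (hW : ∀ s ∈ Set.Ioo α β, HasDerivAt W (W' s) s)
    (h : ∀ s ∈ Set.Ioo α β, volterra (W' s) = (Complex.I * μ) • W s) :
    ∀ s ∈ Set.Ioo α β, W s = 0 := by
  intro s hs
  set U : Set ℂ := Complex.re ⁻¹' Set.Ioo α β ∩ {z | -μ * z.im < 1} with hU
  have hUo : IsOpen U := (isOpen_Ioo.preimage Complex.continuous_re).inter
    (isOpen_lt (continuous_const.mul Complex.continuous_im) continuous_const)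
  have hUc : Convex ℝ U := by
    refine ((convex_Ioo α β).linear_preimage Complex.reLm).inter ?_
    exact (convex_Iio (1 : ℝ)).linear_preimage ((-μ) • Complex.imLm)
  set g : ℂ → ℂ := fun z => W z.re (Set.projIcc 0 1 zero_le_one (-μ * z.im)) with hg
  have hgd : DifferentiableOn ℂ g U := fun z hz =>
    (hasDerivAt_eval_of_volterra_eq hμ hW h hz.1 hz.2).differentiableAt.differentiableWithinAt
  have hc : Complex.I * μ ≠ 0 := mul_ne_zero Complex.I_ne_zero (by exact_mod_cast hμ)
  have hmem (y : ℝ) (hy : y < 1) : (⟨s, -y / μ⟩ : ℂ) ∈ U :=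
    ⟨hs, by
      change -μ * (-y / μ) < 1
      rwa [mul_div_assoc', neg_mul_neg, mul_div_cancel_left₀ _ hμ]⟩
  have hev : g =ᶠ[nhds (⟨s, -(-1) / μ⟩ : ℂ)] 0 := by
    have hop : IsOpen (U ∩ {z : ℂ | -μ * z.im < 0}) :=
      hUo.inter (isOpen_lt (continuous_const.mul Complex.continuous_im) continuous_const)
    filter_upwards [hop.mem_nhds ⟨hmem (-1) (by norm_num), by
      change -μ * (-(-1) / μ) < 0
      rw [mul_div_assoc', neg_mul_neg, mul_div_cancel_left₀ _ hμ]
      norm_num⟩] with z hz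
    have h1 := congrArg (fun f : C(unitInterval, ℂ) => f 0) (h z.re hz.1.1)
    simp only [volterra_apply, Set.Icc.coe_zero, intervalIntegral.integral_same,
      ContinuousMap.smul_apply, smul_eq_mul] at h1
    have hz0 : -μ * z.im ≤ 0 := le_of_lt hz.2
    change W z.re (Set.projIcc 0 1 zero_le_one (-μ * z.im)) = 0
    rw [Set.projIcc_of_le_left zero_le_one hz0]
    exact (mul_eq_zero.1 h1.symm).resolve_left hc
  have hzero := (hgd.analyticOnNhd hUo).eqOn_zero_of_preconnected_of_eventuallyEq_zero
    hUc.isPreconnected (hmem (-1) (by norm_num)) hev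
  have hlt : ∀ y : ℝ, y < 1 → W s (Set.projIcc 0 1 zero_le_one y) = 0 := by
    intro y hy
    have := hzero (hmem y hy)
    simp only [hg, Pi.zero_apply] at this
    rwa [mul_div_assoc', neg_mul_neg, mul_div_cancel_left₀ _ hμ] at this
  have hcl : Set.EqOn (fun y : ℝ => W s (Set.projIcc 0 1 zero_le_one y)) (fun _ => 0)
      (closure (Set.Iio 1)) :=
    Set.EqOn.closure (fun y hy => hlt y hy) ((W s).continuous.comp continuous_projIcc)
      continuous_const
  rw [closure_Iio] at hcl
  ext t
  have := hcl (Set.mem_Iic.2 t.2.2)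
  simpa using this

open NormedSpace in
/-- The equation `h V w' = iν w + h V B w`, with `B` commuting with `V`, has only the zero
solution. -/
lemma eq_zero_of_clm_deriv_eq {E : Type*} [NormedAddCommGroup E] [NormedSpace ℂ E]
    [CompleteSpace E] {V : E →L[ℂ] E}
    (hV : ∀ {W W' : ℝ → E} {α β μ : ℝ}, μ ≠ 0 → (∀ s ∈ Set.Ioo α β, HasDerivAt W (W' s) s) →
      (∀ s ∈ Set.Ioo α β, V (W' s) = (Complex.I * μ) • W s) → ∀ s ∈ Set.Ioo α β, W s = 0)
    {w w' : ℝ → E} {α β h ν : ℝ} (hh : 0 < h)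
    (hν : ν ≠ 0) {B : E →L[ℂ] E} (hB : Commute B V)
    (hw : ∀ s ∈ Set.Ioo α β, HasDerivAt w (w' s) s)
    (heq : ∀ s ∈ Set.Ioo α β,
      (h : ℂ) • V (w' s) = (Complex.I * ν) • w s + (h : ℂ) • V (B (w s))) :
    ∀ s ∈ Set.Ioo α β, w s = 0 := by
  have hh' : (h : ℂ) ≠ 0 := by exact_mod_cast hh.ne'
  have hexp (s : ℝ) : HasDerivAt
      (fun u : ℝ => (exp (u • (-B))).restrictScalars ℝ)
      ((exp (s • (-B)) * (-B)).restrictScalars ℝ) s :=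
    HasFDerivAt.comp_hasDerivAt s
      (l := ContinuousLinearMap.restrictScalarsL ℂ E E ℝ ℝ)
      (ContinuousLinearMap.hasFDerivAt _) (hasDerivAt_exp_smul_const (-B) s)
  have hcomm (s : ℝ) (f : E) :
      V (exp (s • (-B)) f) = exp (s • (-B)) (V f) := by
    have : Commute (exp (s • (-B))) V := (hB.neg_left.smul_left s).exp_left
    exact (DFunLike.congr_fun this.eq f).symm
  have hW : ∀ s ∈ Set.Ioo α β, HasDerivAt (fun s => exp (s • (-B)) (w s))
      (exp (s • (-B)) (w' s - B (w s))) s := by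
    intro s hs
    have := (hexp s).clm_apply (hw s hs)
    refine this.congr_deriv ?_
    simp [sub_eq_neg_add]
  have hzero := hV (μ := ν / h) (div_ne_zero hν hh.ne') hW (by
    intro s hs
    have h1 : V (w' s - B (w s)) = (Complex.I * ((ν / h : ℝ) : ℂ)) • w s := by
      rw [map_sub, ← sub_eq_zero]
      have := heq s hs
      apply smul_right_injective _ hh'
      simp only [smul_sub, smul_zero, this, smul_smul]
      rw [show (h : ℂ) * (Complex.I * ((ν / h : ℝ) : ℂ)) = Complex.I * ν by
        push_cast; field_simp]
      abel
    rw [hcomm, h1, map_smul])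
  intro s hs
  have h1 := congrArg (fun f => exp (-(s • (-B))) f) (hzero s hs)
  rw [map_zero] at h1
  let _ : NormedAlgebra ℚ (E →L[ℂ] E) := .restrictScalars ℚ ℂ _
  have h2 : exp (-(s • (-B))) * exp (s • (-B)) = 1 :=
    (exp_add_of_commute (Commute.refl (s • (-B))).neg_left).symm.trans (by simp)
  simpa using (DFunLike.congr_fun h2 (w s)).symm.trans h1

/-- Solutions of `3 F' + h² V² (F''' + F' + (lam / 2) F) = 0`
satisfy a first order equation `F' = A F`. -/
lemma exists_deriv_eq_clm {E : Type*} [NormedAddCommGroup E] [NormedSpace ℂ E]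
    [CompleteSpace E] [Nontrivial E] {V : E →L[ℂ] E}
    (hV : ∀ {W W' : ℝ → E} {α β μ : ℝ}, μ ≠ 0 → (∀ s ∈ Set.Ioo α β, HasDerivAt W (W' s) s) →
      (∀ s ∈ Set.Ioo α β, V (W' s) = (Complex.I * μ) • W s) → ∀ s ∈ Set.Ioo α β, W s = 0)
    (hVn : ‖V‖ ≤ 1)
    {lam : ℝ} (hlam : 0 < lam) {h : ℝ} (hh : 0 < h)
    (hh2 : h ≤ 1 / 2) (hhl : h * lam ≤ 1 / 2) {α β : ℝ} {F₀ F₁ F₂ F₃ : ℝ → E}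
    (h₀ : ∀ s, HasDerivAt F₀ (F₁ s) s) (h₁ : ∀ s, HasDerivAt F₁ (F₂ s) s)
    (h₂ : ∀ s, HasDerivAt F₂ (F₃ s) s)
    (heq : ∀ s ∈ Set.Ioo α β, (3 : ℂ) • F₁ s +
      (h : ℂ) • V ((h : ℂ) • V (F₃ s + F₁ s + (lam / 2 : ℂ) • F₀ s)) = 0) :
    ∃ A : E →L[ℂ] E, ‖A‖ ≤ 1 / 4 ∧
      ∀ s ∈ Set.Ioo α β, F₁ s = A (F₀ s) := by
  set R := Algebra.elemental ℂ V with hR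
  let _ : NormedCommRing R :=
    { SubringClass.toNormedRing R with
      mul_comm := mul_comm }
  set j : R := (h : ℂ) • ⟨V, Algebra.elemental.self_mem ℂ _⟩ with hj
  have hjn : ‖j‖ ≤ h := by
    change ‖(h : ℂ) • V‖ ≤ h
    rw [norm_smul, Complex.norm_real, Real.norm_of_nonneg hh.le]
    exact mul_le_of_le_one_right hh.le hVn
  obtain ⟨A, β₁, β₂, Y₁, Y₂, hA, hY₁, hY₂, hsum, hprod, hAprod⟩ :=
    exists_cubic_factorization hlam (hjn.trans hh2)
      ((mul_le_mul_of_nonneg_right hjn hlam.le).trans hhl)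
  have hjapp (f : E) : (h : ℂ) • V f = j • f := rfl
  have hcl (c : ℂ) (f : E) : c • f = algebraMap ℂ R c • f := rfl
  have hcoe (X : R) (f : E) : (X : E →L[ℂ] E) f = X • f := rfl
  have hder (X : R) {f f' : ℝ → E} (hf : ∀ s, HasDerivAt f (f' s) s) (s : ℝ) :
      HasDerivAt (fun s => X • f s) (X • f' s) s :=
    HasFDerivAt.comp_hasDerivAt s
      (l := (X : E →L[ℂ] E).restrictScalars ℝ)
      (ContinuousLinearMap.hasFDerivAt _) (hf s)
  have hcommute (X : R) : Commute (X : E →L[ℂ] E) V :=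
    congrArg Subtype.val (mul_comm X ⟨V, Algebra.elemental.self_mem ℂ _⟩)
  have hs3 : (√3 : ℝ) ≠ 0 := by positivity
  have hw : ∀ s ∈ Set.Ioo α β, j • (F₂ s - A • F₁ s) - Y₂ • (F₁ s - A • F₀ s) = 0 := by
    refine eq_zero_of_clm_deriv_eq hV
      (w' := fun s => j • (F₃ s - A • F₂ s) - Y₂ • (F₂ s - A • F₁ s)) hh hs3 (hcommute β₁)
      (fun s _ => (hder j (fun s => (h₂ s).sub (hder A h₁ s)) s).sub
        (hder Y₂ (fun s => (h₁ s).sub (hder A h₀ s)) s)) fun s hs => ?_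
    have e := heq s hs
    simp only [hjapp, hcl, hcoe] at e ⊢
    rw [map_ofNat] at e
    linear_combination (norm := skip) e - (j * hsum) • F₂ s + (j * A * hsum + hprod) • F₁ s -
      hAprod • F₀ s + (hY₁ • (j • (F₂ s - A • F₁ s) - Y₂ • (F₁ s - A • F₀ s)))
    module
  have hu : ∀ s ∈ Set.Ioo α β, F₁ s - A • F₀ s = 0 := by
    refine eq_zero_of_clm_deriv_eq hV
      (w' := fun s => F₂ s - A • F₁ s) hh (neg_ne_zero.2 hs3) (hcommute β₂)
      (fun s _ => (h₁ s).sub (hder A h₀ s)) fun s hs => ?_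
    have e := hw s hs
    simp only [hjapp, hcl, hcoe]
    rw [sub_eq_zero.1 e, hY₂]
    push_cast
    rw [mul_neg, add_smul, mul_smul]
  exact ⟨A, hA, fun s hs => sub_eq_zero.1 (hu s hs)⟩

/-- The functions `τ ↦ g (s, t₀ + h τ)` on `[0,1]`, depending continuously on `s`. -/
def slice (t₀ h : ℝ) (g : C(ℝ × ℝ, ℝ)) : C(ℝ, C(unitInterval, ℂ)) :=
  ContinuousMap.curry ⟨fun p => (g (p.1, t₀ + h * p.2) : ℂ), by fun_prop⟩

lemma slice_apply (t₀ h : ℝ) (g : C(ℝ × ℝ, ℝ)) (s : ℝ) (τ : unitInterval) :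
    slice t₀ h g s τ = (g (s, t₀ + h * τ) : ℂ) := rfl

lemma hasDerivAt_slice {g g' : C(ℝ × ℝ, ℝ)}
    (hg : ∀ s t, HasDerivAt (fun s => g (s, t)) (g' (s, t)) s) (t₀ h s : ℝ) :
    HasDerivAt (slice t₀ h g) (slice t₀ h g' s) s := by
  have hc := (slice t₀ h g').continuous
  have heq : ⇑(slice t₀ h g) = fun s => slice t₀ h g 0 + ∫ u in (0 : ℝ)..s, slice t₀ h g' u := by
    funext u
    ext τ
    have h1 := (ContinuousMap.evalCLM ℂ τ).intervalIntegral_comp_comm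
      (hc.intervalIntegrable (μ := volume) 0 u)
    have hcτ : Continuous fun v => slice t₀ h g' v τ :=
      (ContinuousMap.evalCLM ℂ τ).continuous.comp hc
    have h2 : ∫ v in (0 : ℝ)..u, slice t₀ h g' v τ = slice t₀ h g u τ - slice t₀ h g 0 τ :=
      intervalIntegral.integral_eq_sub_of_hasDerivAt (f := fun v => slice t₀ h g v τ)
        (fun v _ => (hg v (t₀ + h * τ)).ofReal_comp) (hcτ.intervalIntegrable _ _)
    have h3 : (∫ v in (0 : ℝ)..u, slice t₀ h g' v) τ = ∫ v in (0 : ℝ)..u, slice t₀ h g' v τ :=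
      h1.symm
    rw [ContinuousMap.add_apply, h3, h2]
    ring
  rw [heq]
  exact (hc.integral_hasStrictDerivAt 0 s).hasDerivAt.const_add _

lemma volterra_slice {k k' : C(ℝ × ℝ, ℝ)} {s t₀ : ℝ}
    (hk : ∀ t, HasDerivAt (fun t => k (s, t)) (k' (s, t)) t) (h0 : k (s, t₀) = 0) (h : ℝ) :
    (h : ℂ) • volterra (slice t₀ h k' s) = slice t₀ h k s := by
  ext τ
  rw [ContinuousMap.smul_apply, volterra_apply, smul_eq_mul,
    ← intervalIntegral.integral_const_mul, slice_apply]
  have h1 : ∀ x : ℝ, HasDerivAt (fun x : ℝ => (k (s, t₀ + h * x) : ℂ))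
      ((h : ℂ) * (k' (s, t₀ + h * x) : ℂ)) x := by
    intro x
    have h2 : HasDerivAt (fun x : ℝ => t₀ + h * x) h x := by
      simpa using ((hasDerivAt_id x).const_mul h).const_add t₀
    have := ((hk (t₀ + h * x)).comp x h2).ofReal_comp
    refine this.congr_deriv ?_
    push_cast
    ring
  have hcont : Continuous fun x : ℝ => (h : ℂ) * (k' (s, t₀ + h * x) : ℂ) := by fun_prop
  rw [intervalIntegral.integral_congr (g := fun x => (h : ℂ) * (k' (s, t₀ + h * x) : ℂ)),
    intervalIntegral.integral_eq_sub_of_hasDerivAt (fun x _ => h1 x)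
      (hcont.intervalIntegrable _ _)]
  · simp [h0]
  · intro x hx
    rw [Set.uIcc_of_le τ.2.1] at hx
    simp only [slice_apply]
    rw [Set.projIcc_of_mem zero_le_one ⟨hx.1, hx.2.trans τ.2.2⟩]

/-- A bound for `∂ₛ g` by `g`, for solutions `g` of `6 g_tts + 2 g_sss + 2 g_s + lam g = 0` with
`g_s = g_st = 0` at `t = t₀`. -/
lemma abs_deriv_le_of_eq {lam : ℝ} (hlam : 0 < lam) {h : ℝ} (hh : 0 < h)
    (hh2 : h ≤ 1 / 2) (hhl : h * lam ≤ 1 / 2) {α β t₀ M : ℝ} {g₀ g₁ g₂ g₃ k₁ k₂ : C(ℝ × ℝ, ℝ)}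
    (h₀ : ∀ s t, HasDerivAt (fun s => g₀ (s, t)) (g₁ (s, t)) s)
    (h₁ : ∀ s t, HasDerivAt (fun s => g₁ (s, t)) (g₂ (s, t)) s)
    (h₂ : ∀ s t, HasDerivAt (fun s => g₂ (s, t)) (g₃ (s, t)) s)
    (hk₁ : ∀ s t, HasDerivAt (fun t => g₁ (s, t)) (k₁ (s, t)) t)
    (hk₂ : ∀ s t, HasDerivAt (fun t => k₁ (s, t)) (k₂ (s, t)) t)
    (hz₁ : ∀ s ∈ Set.Ioo α β, g₁ (s, t₀) = 0) (hz₂ : ∀ s ∈ Set.Ioo α β, k₁ (s, t₀) = 0)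
    (heq : ∀ s ∈ Set.Ioo α β, ∀ t ∈ Set.Icc t₀ (t₀ + h),
      6 * k₂ (s, t) + 2 * g₃ (s, t) + 2 * g₁ (s, t) + lam * g₀ (s, t) = 0)
    (hM : ∀ s ∈ Set.Ioo α β, ∀ t ∈ Set.Icc t₀ (t₀ + h), |g₀ (s, t)| ≤ M) :
    ∀ s ∈ Set.Ioo α β, |g₁ (s, t₀ + h)| ≤ M / 4 := by
  have hmem (τ : unitInterval) : t₀ + h * τ ∈ Set.Icc t₀ (t₀ + h) :=
    ⟨by nlinarith [τ.2.1], by nlinarith [τ.2.2]⟩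
  obtain ⟨A, hA, hF⟩ := exists_deriv_eq_clm eq_zero_of_volterra_eq norm_volterra_le hlam hh hh2 hhl
    (α := α) (β := β) (hasDerivAt_slice h₀ t₀ h) (hasDerivAt_slice h₁ t₀ h)
    (hasDerivAt_slice h₂ t₀ h) (by
      intro s hs
      have h1 : slice t₀ h g₃ s + slice t₀ h g₁ s + (lam / 2 : ℂ) • slice t₀ h g₀ s =
          (-3 : ℂ) • slice t₀ h k₂ s := by
        ext τ
        simp only [ContinuousMap.add_apply, ContinuousMap.smul_apply, slice_apply, smul_eq_mul]
        have := congrArg (fun x : ℝ => (x : ℂ)) (heq s hs _ (hmem τ))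
        push_cast at this ⊢
        linear_combination this / 2
      have h2 (f : C(unitInterval, ℂ)) :
          (h : ℂ) • volterra ((-3 : ℂ) • f) = (-3 : ℂ) • ((h : ℂ) • volterra f) := by
        rw [map_smul, smul_comm]
      rw [h1, h2, volterra_slice (hk₂ s) (hz₂ s hs), h2, volterra_slice (hk₁ s) (hz₁ s hs)]
      module)
  intro s hs
  have hM0 : 0 ≤ M := (abs_nonneg _).trans (hM s hs t₀ ⟨le_rfl, by linarith⟩)
  have hle : ‖slice t₀ h g₁ s‖ ≤ 1 / 4 * M := by
    rw [hF s hs]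
    refine (A.le_opNorm _).trans ?_
    gcongr
    rw [ContinuousMap.norm_le _ hM0]
    intro τ
    rw [slice_apply, Complex.norm_real]
    exact hM s hs _ (hmem τ)
  have := (ContinuousMap.norm_coe_le_norm (slice t₀ h g₁ s) 1).trans hle
  rw [slice_apply, Complex.norm_real, Set.Icc.coe_one, mul_one, Real.norm_eq_abs] at this
  linarith

/-- `g₀` solves `6 g_tts + 2 g_sss + 2 g_s + lam g = 0` on the triangle `0 ≤ t ≤ s ≤ 2 - t` and
vanishes on the side `s = t`; here `g₁, g₂, g₃` are its `s`-derivatives, `l` is its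
`t`-derivative, and `k₁, k₂` are the `t`-derivatives of `g₁`. -/
structure IsTriangleSolution (lam : ℝ) (g₀ g₁ g₂ g₃ l k₁ k₂ : C(ℝ × ℝ, ℝ)) : Prop where
  deriv₀ : ∀ s t, HasDerivAt (fun s => g₀ (s, t)) (g₁ (s, t)) s
  deriv₁ : ∀ s t, HasDerivAt (fun s => g₁ (s, t)) (g₂ (s, t)) s
  deriv₂ : ∀ s t, HasDerivAt (fun s => g₂ (s, t)) (g₃ (s, t)) s
  deriv_l : ∀ s t, HasDerivAt (fun t => g₀ (s, t)) (l (s, t)) t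
  deriv_l' : ∀ s t, HasDerivAt (fun s => l (s, t)) (k₁ (s, t)) s
  deriv_k₁ : ∀ s t, HasDerivAt (fun t => g₁ (s, t)) (k₁ (s, t)) t
  deriv_k₂ : ∀ s t, HasDerivAt (fun t => k₁ (s, t)) (k₂ (s, t)) t
  eqn : ∀ s t, 0 ≤ t → t ≤ s → s ≤ 2 - t →
    6 * k₂ (s, t) + 2 * g₃ (s, t) + 2 * g₁ (s, t) + lam * g₀ (s, t) = 0
  side : ∀ t, 0 ≤ t → t ≤ 1 → g₀ (t, t) = 0

lemma eq_zero_of_hasDerivAt_of_eqOn_Ioo {f : ℝ → ℝ} {f' a b s : ℝ} (hf : HasDerivAt f f' s)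
    (h : ∀ u ∈ Set.Ioo a b, f u = 0) (hs : s ∈ Set.Ioo a b) : f' = 0 := by
  refine hf.unique ((hasDerivAt_const s (0 : ℝ)).congr_of_eventuallyEq ?_)
  filter_upwards [isOpen_Ioo.mem_nhds hs] with u hu using h u hu

namespace IsTriangleSolution

variable {lam : ℝ} {g₀ g₁ g₂ g₃ l k₁ k₂ : C(ℝ × ℝ, ℝ)}

lemma eq_zero_of_eq_zero (hg : IsTriangleSolution lam g₀ g₁ g₂ g₃ l k₁ k₂) (hlam : 0 < lam)
    {δ : ℝ} (hδ : δ ≤ 1 / 2) (hδl : δ * lam ≤ 1 / 2) {t₀ : ℝ} (ht₀ : 0 ≤ t₀)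
    (hz : ∀ s, t₀ ≤ s → s ≤ 2 - t₀ → g₀ (s, t₀) = 0)
    (hz' : ∀ s, t₀ ≤ s → s ≤ 2 - t₀ → l (s, t₀) = 0) {s t : ℝ} (ht : t₀ ≤ t) (htδ : t ≤ t₀ + δ)
    (hts : t ≤ s) (hst : s ≤ 2 - t) : g₀ (s, t) = 0 := by
  set K : Set (ℝ × ℝ) := {p | t₀ ≤ p.2 ∧ p.2 ≤ t₀ + δ ∧ p.2 ≤ p.1 ∧ p.1 ≤ 2 - p.2} with hK
  have hKc : IsCompact K := by
    refine IsCompact.of_isClosed_subset (isCompact_Icc (a := ((t₀, t₀) : ℝ × ℝ))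
      (b := (2 - t₀, t₀ + δ))) ?_ ?_
    · exact (isClosed_le continuous_const continuous_snd).inter
        ((isClosed_le continuous_snd continuous_const).inter
        ((isClosed_le continuous_snd continuous_fst).inter
        (isClosed_le continuous_fst (continuous_const.sub continuous_snd))))
    · rintro ⟨u, v⟩ ⟨h1, h2, h3, h4⟩
      simp only at h1 h2 h3 h4
      exact ⟨⟨by simp only; linarith, h1⟩, ⟨by simp only; linarith, h2⟩⟩
  obtain ⟨⟨u, v⟩, ⟨hv, hvδ, hvu, huv⟩, hmax⟩ := hKc.exists_isMaxOn
    ⟨(s, t), ht, htδ, hts, hst⟩ (f := fun p => |g₀ p|) (by fun_prop)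
  simp only at hv hvδ hvu huv
  have hle : ∀ s' t', t₀ ≤ t' → t' ≤ t₀ + δ → t' ≤ s' → s' ≤ 2 - t' →
      |g₀ (s', t')| ≤ |g₀ (u, v)| := fun s' t' h1 h2 h3 h4 =>
    hmax (show (s', t') ∈ K from ⟨h1, h2, h3, h4⟩)
  suffices h : |g₀ (u, v)| = 0 by
    exact abs_nonpos_iff.1 ((hle s t ht htδ hts hst).trans h.le)
  rcases hv.eq_or_lt with rfl | hv
  · rw [hz u hvu huv, abs_zero]
  rcases hvu.eq_or_lt with rfl | hvu
  · rw [hg.side _ (by linarith) (by linarith), abs_zero]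
  have hv' : t₀ + (v - t₀) = v := by ring
  have hbound := abs_deriv_le_of_eq hlam (h := v - t₀) (by linarith) (by linarith)
    ((mul_le_mul_of_nonneg_right (by linarith) hlam.le).trans hδl) (α := v) (β := 2 - v)
    (t₀ := t₀) (M := |g₀ (u, v)|) hg.deriv₀ hg.deriv₁ hg.deriv₂ hg.deriv_k₁ hg.deriv_k₂
    (fun s hs => eq_zero_of_hasDerivAt_of_eqOn_Ioo (hg.deriv₀ s t₀)
      (fun s hs => hz s (by linarith [hs.1]) (by linarith [hs.2])) hs)
    (fun s hs => eq_zero_of_hasDerivAt_of_eqOn_Ioo (hg.deriv_l' s t₀)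
      (fun s hs => hz' s (by linarith [hs.1]) (by linarith [hs.2])) hs)
    (fun s hs t ht => hg.eqn s t (ht₀.trans ht.1) (by linarith [hs.1, ht.2])
      (by linarith [hs.2, ht.2]))
    (fun s hs t ht => hle s t ht.1 (by linarith [ht.2]) (by linarith [hs.1, ht.2])
      (by linarith [hs.2, ht.2]))
  rw [hv'] at hbound
  obtain ⟨ξ, hξ, hξe⟩ := exists_hasDerivAt_eq_slope (fun s => g₀ (s, v)) (fun s => g₁ (s, v)) hvu
    (by fun_prop) (fun s _ => hg.deriv₀ s v)
  rw [hg.side v (by linarith) (by linarith), sub_zero, eq_div_iff (by linarith)] at hξe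
  have h1 := hbound ξ ⟨hξ.1, by linarith [hξ.2]⟩
  have h2 : |g₀ (u, v)| = |g₁ (ξ, v)| * (u - v) := by
    rw [← hξe, abs_mul, abs_of_pos (sub_pos.2 hvu)]
  have h3 : |g₁ (ξ, v)| * (u - v) ≤ |g₀ (u, v)| / 4 * 2 := by
    gcongr
    linarith
  linarith [abs_nonneg (g₀ (u, v))]

/-- Vanishing Cauchy data on `t = 0` propagate to the whole triangle. -/
lemma eq_zero (hg : IsTriangleSolution lam g₀ g₁ g₂ g₃ l k₁ k₂) (hlam : 0 < lam)
    (hz : ∀ s, 0 ≤ s → s ≤ 2 → g₀ (s, 0) = 0) (hz' : ∀ s, 0 ≤ s → s ≤ 2 → l (s, 0) = 0)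
    {s t : ℝ} (ht : 0 ≤ t) (hts : t ≤ s) (hst : s ≤ 2 - t) : g₀ (s, t) = 0 := by
  obtain ⟨δ, hδ0, hδ, hδl⟩ : ∃ δ : ℝ, 0 < δ ∧ δ ≤ 1 / 2 ∧ δ * lam ≤ 1 / 2 := by
    refine ⟨min (1 / 2) (1 / (2 * lam)), by positivity, min_le_left _ _, ?_⟩
    calc _ ≤ 1 / (2 * lam) * lam := by gcongr; exact min_le_right _ _
      _ = 1 / 2 := by field_simp
  have key : ∀ n : ℕ, ∀ t, 0 ≤ t → t ≤ n * δ → ∀ s, t ≤ s → s ≤ 2 - t → g₀ (s, t) = 0 := by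
    intro n
    induction n with
    | zero =>
      intro t ht htn s hts hst
      obtain rfl : t = 0 := le_antisymm (by simpa using htn) ht
      exact hz s hts (by simpa using hst)
    | succ n ih =>
      intro t ht htn s hts hst
      rcases le_total t (n * δ) with h | h
      · exact ih t ht h s hts hst
      have hn : 0 ≤ n * δ := by positivity
      refine hg.eq_zero_of_eq_zero hlam hδ hδl hn (ih _ hn le_rfl) ?_ h
        (by push_cast at htn; linarith) hts hst
      intro s hs hs'
      rcases hn.eq_or_lt with h0 | h0
      · rw [← h0] at hs hs' ⊢
        exact hz' s hs (by simpa using hs')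
      refine (uniqueDiffOn_Icc h0 (n * δ) ⟨hn, le_rfl⟩).eq_deriv _
        (hg.deriv_l s (n * δ)).hasDerivWithinAt ?_
      refine (hasDerivWithinAt_const (n * δ) _ (0 : ℝ)).congr (fun v hv => ?_)
        (ih _ hn le_rfl s hs hs')
      exact ih v hv.1 hv.2 s (hv.2.trans hs) (by linarith [hv.2])
  obtain ⟨n, hn⟩ := exists_nat_ge (t / δ)
  exact key n t ht ((div_le_iff₀ hδ0).1 hn) s hts hst

end IsTriangleSolution

/-- The directional derivative of `f` along `v`. -/
def dirDeriv (v : ℝ × ℝ) (f : ℝ × ℝ → ℝ) (p : ℝ × ℝ) : ℝ := fderiv ℝ f p v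

section dirDeriv

variable {f g : ℝ × ℝ → ℝ}

lemma ContDiff.dirDeriv {m n : WithTop ℕ∞} (hf : ContDiff ℝ n f) (hmn : m + 1 ≤ n) (v : ℝ × ℝ) :
    ContDiff ℝ m (dirDeriv v f) :=
  (hf.fderiv_right hmn).clm_apply contDiff_const

lemma HasDerivAt.comp_dirDeriv (hf : Differentiable ℝ f) {γ : ℝ → ℝ × ℝ} {v : ℝ × ℝ} {s : ℝ}
    (hγ : HasDerivAt γ v s) : HasDerivAt (fun s => f (γ s)) (dirDeriv v f (γ s)) s :=
  (hf (γ s)).hasFDerivAt.comp_hasDerivAt s hγ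

lemma dirDeriv_sub (hf : Differentiable ℝ f) (hg : Differentiable ℝ g) (v : ℝ × ℝ) :
    dirDeriv v (f - g) = dirDeriv v f - dirDeriv v g := by
  funext p
  simp [dirDeriv, fderiv_sub (hf p) (hg p)]

lemma dirDeriv_add (hf : Differentiable ℝ f) (hg : Differentiable ℝ g) (v : ℝ × ℝ) :
    dirDeriv v (f + g) = dirDeriv v f + dirDeriv v g := by
  funext p
  simp [dirDeriv, fderiv_add (hf p) (hg p)]

lemma dirDeriv_sub_dir (v w : ℝ × ℝ) : dirDeriv (v - w) f = dirDeriv v f - dirDeriv w f := by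
  funext p
  simp [dirDeriv]

lemma dirDeriv_add_dir (v w : ℝ × ℝ) : dirDeriv (v + w) f = dirDeriv v f + dirDeriv w f := by
  funext p
  simp [dirDeriv]

lemma dirDeriv_comm (hf : ContDiff ℝ 2 f) (v w : ℝ × ℝ) :
    dirDeriv v (dirDeriv w f) = dirDeriv w (dirDeriv v f) := by
  funext p
  have hd : DifferentiableAt ℝ (fderiv ℝ f) p :=
    ((hf.fderiv_right (m := 1) (by norm_num)).differentiable (by norm_num)) p
  have h (v w : ℝ × ℝ) : dirDeriv v (dirDeriv w f) p = fderiv ℝ (fderiv ℝ f) p v w := by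
    change fderiv ℝ (fun q => fderiv ℝ f q w) p v = _
    rw [fderiv_clm_apply hd (by fun_prop)]
    simp
  rw [h, h]
  exact (hf.contDiffAt.isSymmSndFDerivAt (by simp)).eq v w

lemma uncurry_pdx {r : ℝ → ℝ → ℝ} (hr : Differentiable ℝ (Function.uncurry r)) :
    Function.uncurry (pdx r) = dirDeriv (1, 0) (Function.uncurry r) := by
  funext ⟨x, y⟩
  exact (HasDerivAt.comp_dirDeriv hr ((hasDerivAt_id x).prodMk (hasDerivAt_const x y))).deriv

lemma uncurry_pdy {r : ℝ → ℝ → ℝ} (hr : Differentiable ℝ (Function.uncurry r)) :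
    Function.uncurry (pdy r) = dirDeriv (0, 1) (Function.uncurry r) := by
  funext ⟨x, y⟩
  exact (HasDerivAt.comp_dirDeriv hr ((hasDerivAt_const y x).prodMk (hasDerivAt_id y))).deriv

lemma uncurry_pdx_pdx_pdx {r : ℝ → ℝ → ℝ} (hr : ContDiff ℝ 3 (Function.uncurry r)) :
    Function.uncurry (pdx (pdx (pdx r))) =
      dirDeriv (1, 0) (dirDeriv (1, 0) (dirDeriv (1, 0) (Function.uncurry r))) := by
  have h1 := uncurry_pdx (hr.differentiable (by norm_num))
  have c1 := hr.dirDeriv (m := 2) (by norm_num) (1, 0)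
  rw [← h1] at c1 ⊢
  have h2 := uncurry_pdx (c1.differentiable (by norm_num))
  have c2 := c1.dirDeriv (m := 1) (by norm_num) (1, 0)
  rw [← h2] at c2 ⊢
  exact uncurry_pdx (c2.differentiable (by norm_num))

lemma uncurry_pdy_pdy_pdy {r : ℝ → ℝ → ℝ} (hr : ContDiff ℝ 3 (Function.uncurry r)) :
    Function.uncurry (pdy (pdy (pdy r))) =
      dirDeriv (0, 1) (dirDeriv (0, 1) (dirDeriv (0, 1) (Function.uncurry r))) := by
  have h1 := uncurry_pdy (hr.differentiable (by norm_num))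
  have c1 := hr.dirDeriv (m := 2) (by norm_num) (0, 1)
  rw [← h1] at c1 ⊢
  have h2 := uncurry_pdy (c1.differentiable (by norm_num))
  have c2 := c1.dirDeriv (m := 1) (by norm_num) (0, 1)
  rw [← h2] at c2 ⊢
  exact uncurry_pdy (c2.differentiable (by norm_num))

/-- The kernel operator in the coordinates `s = x + y`, `t = y - x`. -/
lemma dirDeriv_cubes_eq (hf : ContDiff ℝ 3 f) (a b : ℝ × ℝ) (p : ℝ × ℝ) :
    dirDeriv (a - b) (dirDeriv (a - b) (dirDeriv (a - b) f)) p +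
      dirDeriv (a + b) (dirDeriv (a + b) (dirDeriv (a + b) f)) p +
      dirDeriv (a - b) f p + dirDeriv (a + b) f p =
    6 * dirDeriv b (dirDeriv b (dirDeriv a f)) p + 2 * dirDeriv a (dirDeriv a (dirDeriv a f)) p +
      2 * dirDeriv a f p := by
  have c1 (v) := hf.dirDeriv (m := 2) (by norm_num) v
  have c2 (v w) := (c1 v).dirDeriv (m := 1) (by norm_num) w
  have d1 (v) := (c1 v).differentiable (by norm_num)
  have d2 (v w) := (c2 v w).differentiable (by norm_num)
  have e1 : dirDeriv a (dirDeriv b f) = dirDeriv b (dirDeriv a f) :=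
    dirDeriv_comm (hf.of_le (by norm_num)) a b
  have e2 : dirDeriv a (dirDeriv b (dirDeriv b f)) = dirDeriv b (dirDeriv b (dirDeriv a f)) := by
    rw [dirDeriv_comm (c1 b) a b, e1]
  simp only [dirDeriv_sub_dir, dirDeriv_add_dir, dirDeriv_sub (d1 _) (d1 _),
    dirDeriv_add (d1 _) (d1 _), dirDeriv_sub (d2 _ _) (d2 _ _),
    dirDeriv_add (d2 _ _) (d2 _ _), dirDeriv_sub ((d2 _ _).sub (d2 _ _)) ((d2 _ _).sub (d2 _ _)),
    dirDeriv_add ((d2 _ _).add (d2 _ _)) ((d2 _ _).add (d2 _ _)), Pi.add_apply, Pi.sub_apply,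
    e1, e2]
  ring

end dirDeriv

/-- The characteristic coordinates `s = x + y`, `t = y - x`, inverted. -/
def charCoord (q : ℝ × ℝ) : ℝ × ℝ := ((q.1 - q.2) / 2, (q.1 + q.2) / 2)

lemma hasDerivAt_charCoord_left (s t : ℝ) :
    HasDerivAt (fun s => charCoord (s, t)) (1 / 2, 1 / 2) s :=
  (((hasDerivAt_id s).sub_const t).div_const 2).prodMk
    (((hasDerivAt_id s).add_const t).div_const 2)

lemma hasDerivAt_charCoord_right (s t : ℝ) :
    HasDerivAt (fun t => charCoord (s, t)) (-1 / 2, 1 / 2) t :=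
  (((hasDerivAt_id t).const_sub s).div_const 2).prodMk
    (((hasDerivAt_id t).const_add s).div_const 2)

lemma continuous_charCoord : Continuous charCoord := by
  unfold charCoord
  fun_prop

lemma eq_zero_on_triangle {lam : ℝ} (hlam : 0 < lam) {d : ℝ × ℝ → ℝ} (hd : ContDiff ℝ 3 d)
    (heq : ∀ p ∈ T, dirDeriv (1, 0) (dirDeriv (1, 0) (dirDeriv (1, 0) d)) p +
      dirDeriv (0, 1) (dirDeriv (0, 1) (dirDeriv (0, 1) d)) p +
      dirDeriv (1, 0) d p + dirDeriv (0, 1) d p = -lam * d p)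
    (hdiag : ∀ x ∈ Set.Icc (0 : ℝ) 1, d (x, x) = 0)
    (hdiag' : ∀ x ∈ Set.Icc (0 : ℝ) 1, dirDeriv (1, 0) d (x, x) = 0)
    (hside : ∀ y ∈ Set.Icc (0 : ℝ) 1, d (0, y) = 0) {p : ℝ × ℝ} (hp : p ∈ T) : d p = 0 := by
  set a : ℝ × ℝ := (1 / 2, 1 / 2) with ha
  set b : ℝ × ℝ := (-1 / 2, 1 / 2) with hb
  have hab : (1, 0) = a - b := by ext <;> norm_num [ha, hb]
  have hab' : (0, 1) = a + b := by ext <;> norm_num [ha, hb]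
  have c1 (v) := hd.dirDeriv (m := 2) (by norm_num) v
  have c2 (v w) := (c1 v).dirDeriv (m := 1) (by norm_num) w
  have c3 (u v w) := (c2 u v).dirDeriv (m := 0) (by norm_num) w
  have d0 := hd.differentiable (by norm_num)
  have d1 (v) := (c1 v).differentiable (by norm_num)
  have d2 (v w) := (c2 v w).differentiable (by norm_num)
  let G (f : ℝ × ℝ → ℝ) (hf : Continuous f) : C(ℝ × ℝ, ℝ) := ⟨_, hf.comp continuous_charCoord⟩
  have hs0 (s : ℝ) : charCoord (s, 0) = (s / 2, s / 2) := by simp [charCoord]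
  have hz (s : ℝ) (h0 : 0 ≤ s) (h2 : s ≤ 2) : d (charCoord (s, 0)) = 0 := by
    rw [hs0]
    exact hdiag _ ⟨by linarith, by linarith⟩
  have hsol : IsTriangleSolution lam (G d hd.continuous) (G _ (c1 a).continuous)
      (G _ (c2 a a).continuous) (G _ (c3 a a a).continuous) (G _ (c1 b).continuous)
      (G _ (c2 a b).continuous) (G _ (c3 a b b).continuous) :=
    { deriv₀ s t := HasDerivAt.comp_dirDeriv d0 (hasDerivAt_charCoord_left s t)
      deriv₁ s t := HasDerivAt.comp_dirDeriv (d1 a) (hasDerivAt_charCoord_left s t)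
      deriv₂ s t := HasDerivAt.comp_dirDeriv (d2 a a) (hasDerivAt_charCoord_left s t)
      deriv_l s t := HasDerivAt.comp_dirDeriv d0 (hasDerivAt_charCoord_right s t)
      deriv_l' s t := by
        have := HasDerivAt.comp_dirDeriv (d1 b) (hasDerivAt_charCoord_left s t)
        rwa [← ha, dirDeriv_comm (hd.of_le (by norm_num)) a b] at this
      deriv_k₁ s t := HasDerivAt.comp_dirDeriv (d1 a) (hasDerivAt_charCoord_right s t)
      deriv_k₂ s t := HasDerivAt.comp_dirDeriv (d2 a b) (hasDerivAt_charCoord_right s t)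
      eqn s t h0 hts hst := by
        have h := heq (charCoord (s, t)) ⟨by simp only [charCoord]; linarith,
          by simp only [charCoord]; linarith, by simp only [charCoord]; linarith⟩
        rw [hab, hab', dirDeriv_cubes_eq hd] at h
        change 6 * dirDeriv b (dirDeriv b (dirDeriv a d)) (charCoord (s, t)) +
          2 * dirDeriv a (dirDeriv a (dirDeriv a d)) (charCoord (s, t)) +
          2 * dirDeriv a d (charCoord (s, t)) + lam * d (charCoord (s, t)) = 0
        linarith
      side t h0 h1 := by
        change d (charCoord (t, t)) = 0
        simpa [charCoord] using hside t ⟨h0, h1⟩ }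
  have hz' (s : ℝ) (h0 : 0 ≤ s) (h2 : s ≤ 2) : dirDeriv b d (charCoord (s, 0)) = 0 := by
    have h1 : dirDeriv a d (charCoord (s, 0)) = 0 := by
      refine (uniqueDiffOn_Icc (zero_lt_two' ℝ) s ⟨h0, h2⟩).eq_deriv _
        (HasDerivAt.comp_dirDeriv d0 (hasDerivAt_charCoord_left s 0)).hasDerivWithinAt ?_
      exact (hasDerivWithinAt_const s _ (0 : ℝ)).congr (fun u hu => hz u hu.1 hu.2) (hz s h0 h2)
    have h3 := hdiag' (s / 2) ⟨by linarith, by linarith⟩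
    rw [hab, dirDeriv_sub_dir, ← hs0, Pi.sub_apply, h1] at h3
    linarith
  have := hsol.eq_zero hlam hz hz' (s := p.1 + p.2) (t := p.2 - p.1) (by linarith [hp.2.1])
    (by linarith [hp.1]) (by linarith [hp.2.2])
  change d (charCoord (p.1 + p.2, p.2 - p.1)) = 0 at this
  rw [← this]
  congr 1
  ext <;> simp only [charCoord] <;> ring

lemma IsInverseObserverKernel.unique {lam : ℝ} (hlam : 0 < lam) {r r' : ℝ → ℝ → ℝ}
    (h : IsInverseObserverKernel lam r) (h' : IsInverseObserverKernel lam r') {x y : ℝ}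
    (hxy : (x, y) ∈ T) : r' x y = r x y := by
  obtain ⟨hr, heq, hdiag, hdiag', hside⟩ := h
  obtain ⟨hr', heq', hdiag₂, hdiag₂', hside₂⟩ := h'
  have D {q : ℝ → ℝ → ℝ} (hq : ContDiff ℝ 3 (Function.uncurry q)) :=
    hq.differentiable (by norm_num)
  have D1 {q : ℝ → ℝ → ℝ} (hq : ContDiff ℝ 3 (Function.uncurry q)) (v) :=
    (hq.dirDeriv (m := 2) (by norm_num) v).differentiable (by norm_num)
  have D2 {q : ℝ → ℝ → ℝ} (hq : ContDiff ℝ 3 (Function.uncurry q)) (v w) :=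
    ((hq.dirDeriv (m := 2) (by norm_num) v).dirDeriv (m := 1) (by norm_num) w).differentiable
      (by norm_num)
  have key {q : ℝ → ℝ → ℝ} (hq : ContDiff ℝ 3 (Function.uncurry q))
      (he : ∀ x y : ℝ, (x, y) ∈ T → pdx (pdx (pdx q)) x y + pdy (pdy (pdy q)) x y + pdx q x y +
        pdy q x y = -lam * q x y) (p : ℝ × ℝ) (hp : p ∈ T) :
      dirDeriv (1, 0) (dirDeriv (1, 0) (dirDeriv (1, 0) (Function.uncurry q))) p +
      dirDeriv (0, 1) (dirDeriv (0, 1) (dirDeriv (0, 1) (Function.uncurry q))) p +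
      dirDeriv (1, 0) (Function.uncurry q) p + dirDeriv (0, 1) (Function.uncurry q) p =
      -lam * Function.uncurry q p := by
    rw [← uncurry_pdx_pdx_pdx hq, ← uncurry_pdy_pdy_pdy hq, ← uncurry_pdx (D hq),
      ← uncurry_pdy (D hq)]
    exact he p.1 p.2 hp
  have hzero := eq_zero_on_triangle hlam (hr'.sub hr) (by
      intro p hp
      have e1 := key hr heq p hp
      have e2 := key hr' heq' p hp
      change dirDeriv (1, 0) (dirDeriv (1, 0) (dirDeriv (1, 0)
          (Function.uncurry r' - Function.uncurry r))) p +
        dirDeriv (0, 1) (dirDeriv (0, 1) (dirDeriv (0, 1)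
          (Function.uncurry r' - Function.uncurry r))) p +
        dirDeriv (1, 0) (Function.uncurry r' - Function.uncurry r) p +
        dirDeriv (0, 1) (Function.uncurry r' - Function.uncurry r) p =
        -lam * (Function.uncurry r' p - Function.uncurry r p)
      simp only [dirDeriv_sub (D hr') (D hr), dirDeriv_sub (D1 hr' _) (D1 hr _),
        dirDeriv_sub (D2 hr' _ _) (D2 hr _ _), Pi.sub_apply]
      linarith)
    (fun x hx => sub_eq_zero.2 ((hdiag₂ x hx).trans (hdiag x hx).symm))
    (by
      intro x hx
      change dirDeriv (1, 0) (Function.uncurry r' - Function.uncurry r) (x, x) = 0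
      rw [dirDeriv_sub (D hr') (D hr), ← uncurry_pdx (D hr'), ← uncurry_pdx (D hr)]
      exact sub_eq_zero.2 ((hdiag₂' x hx).trans (hdiag' x hx).symm))
    (fun y hy => sub_eq_zero.2 ((hside₂ y hy).trans (hside y hy).symm)) hxy
  exact sub_eq_zero.1 hzero

section expFunction

variable {A : Type*} [NormedCommRing A] [NormedAlgebra ℝ A] [CompleteSpace A]

/-- The function `(x, y) ↦ L (exp (x Q + y P))`. -/
def expFunction (Q P : A) (L : A →L[ℝ] ℝ) (x y : ℝ) : ℝ := L (NormedSpace.exp (x • Q + y • P))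

lemma contDiff_expFunction (Q P : A) (L : A →L[ℝ] ℝ) {n : WithTop ℕ∞} :
    ContDiff ℝ n (Function.uncurry (expFunction Q P L)) := by
  have h : ContDiff ℝ n (NormedSpace.exp : A → A) :=
    contDiff_iff_contDiffAt.2 fun x => (NormedSpace.exp_analytic x).contDiffAt
  exact L.contDiff.comp (h.comp (by fun_prop))

lemma pdx_expFunction (Q P : A) (L : A →L[ℝ] ℝ) :
    pdx (expFunction Q P L) = expFunction Q P (L ∘L ContinuousLinearMap.mul ℝ A Q) := by
  let _ : NormedAlgebra ℚ A := .restrictScalars ℚ ℝ A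
  funext x y
  have h := (hasDerivAt_exp_smul_const' (𝕂 := ℝ) Q x).mul_const (NormedSpace.exp (y • P))
  have h' := (L.hasFDerivAt.comp_hasDerivAt x h).deriv
  simp only [pdx, expFunction, NormedSpace.exp_add]
  exact h'.trans (by simp [mul_assoc])

lemma pdy_expFunction (Q P : A) (L : A →L[ℝ] ℝ) :
    pdy (expFunction Q P L) = expFunction Q P (L ∘L ContinuousLinearMap.mul ℝ A P) := by
  let _ : NormedAlgebra ℚ A := .restrictScalars ℚ ℝ A
  funext x y
  have h := (hasDerivAt_exp_smul_const' (𝕂 := ℝ) P y).const_mul (NormedSpace.exp (x • Q))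
  have h' := (L.hasFDerivAt.comp_hasDerivAt y h).deriv
  simp only [pdy, expFunction, NormedSpace.exp_add]
  exact h'.trans (by simp [mul_left_comm])

lemma expFunction_eqn {Q P : A} {lam : ℝ} (h : Q ^ 3 + P ^ 3 + Q + P = algebraMap ℝ A (-lam))
    (L : A →L[ℝ] ℝ) (x y : ℝ) :
    pdx (pdx (pdx (expFunction Q P L))) x y + pdy (pdy (pdy (expFunction Q P L))) x y +
      pdx (expFunction Q P L) x y + pdy (expFunction Q P L) x y = -lam * expFunction Q P L x y := by
  simp only [pdx_expFunction, pdy_expFunction]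
  simp only [expFunction, ContinuousLinearMap.comp_apply, ContinuousLinearMap.mul_apply',
    ← map_add]
  rw [← smul_eq_mul (-lam), ← map_smul, Algebra.smul_def (-lam) (NormedSpace.exp _), ← h]
  congr 1
  ring

end expFunction

/-- Integration over the circle `|z| = ρ` of continuous functions on it. -/
def circleCLM (ρ : ℝ) (hρ : 0 ≤ ρ) : C(Metric.sphere (0 : ℂ) ρ, ℂ) →L[ℂ] ℂ :=
  have hext (F : C(Metric.sphere (0 : ℂ) ρ, ℂ)) :
      CircleIntegrable (Function.extend Subtype.val F 0) 0 ρ :=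
    ContinuousOn.circleIntegrable hρ (by
      rw [continuousOn_iff_continuous_domRestrict]
      convert F.continuous using 1
      exact funext fun z => Subtype.val_injective.extend_apply _ _ z)
  LinearMap.mkContinuous
    { toFun := fun F => ∮ z in C(0, ρ), Function.extend Subtype.val F 0 z
      map_add' := fun F G => by
        rw [← circleIntegral.integral_add (hext F) (hext G)]
        refine circleIntegral.integral_congr hρ fun z hz => ?_
        have he (F : C(Metric.sphere (0 : ℂ) ρ, ℂ)) :=
          Subtype.val_injective.extend_apply F 0 (⟨z, hz⟩ : Metric.sphere (0 : ℂ) ρ)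
        simp only at he
        simp only [he, ContinuousMap.add_apply]
      map_smul' := fun c F => by
        rw [RingHom.id_apply, ← circleIntegral.integral_smul]
        refine circleIntegral.integral_congr hρ fun z hz => ?_
        have he (F : C(Metric.sphere (0 : ℂ) ρ, ℂ)) :=
          Subtype.val_injective.extend_apply F 0 (⟨z, hz⟩ : Metric.sphere (0 : ℂ) ρ)
        simp only at he
        simp only [he, ContinuousMap.smul_apply] }
    (2 * Real.pi * ρ) fun F => circleIntegral.norm_integral_le_of_norm_le_const hρ fun z hz => by
      have he := Subtype.val_injective.extend_apply F 0 (⟨z, hz⟩ : Metric.sphere (0 : ℂ) ρ)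
      simp only at he
      exact he ▸ F.norm_coe_le_norm _

lemma circleCLM_eq {ρ : ℝ} (hρ : 0 ≤ ρ) {F : C(Metric.sphere (0 : ℂ) ρ, ℂ)} {f : ℂ → ℂ}
    (h : ∀ z, F z = f z) : circleCLM ρ hρ F = ∮ z in C(0, ρ), f z :=
  circleIntegral.integral_congr hρ fun z hz =>
    (Subtype.val_injective.extend_apply F 0 (⟨z, hz⟩ : Metric.sphere (0 : ℂ) ρ)).trans (h ⟨z, hz⟩)

lemma ContinuousMap.exp_apply {X : Type*} [TopologicalSpace X] [CompactSpace X] (F : C(X, ℂ))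
    (z : X) : NormedSpace.exp F z = Complex.exp (F z) := by
  let _ : NormedAlgebra ℚ C(X, ℂ) := .restrictScalars ℚ ℂ _
  have := NormedSpace.map_exp (ContinuousMap.evalAlgHom ℂ ℂ z) (continuous_eval_const z) F
  rw [Complex.exp_eq_exp_ℂ]
  exact this

/-- `S` is a holomorphic square root of `(lam - 2 z² - 2 z⁶) / 6` near the disc `|z| ≤ ρ`, with
derivative `S'`. -/
structure IsSymbolRoot (lam ρ : ℝ) (S S' : ℂ → ℂ) : Prop where
  pos : 0 < ρ
  hasDerivAt : ∀ z ∈ Metric.closedBall (0 : ℂ) ρ, HasDerivAt S (S' z) z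
  differentiableAt : ∀ z ∈ Metric.closedBall (0 : ℂ) ρ, DifferentiableAt ℂ S' z
  sq : ∀ z ∈ Metric.closedBall (0 : ℂ) ρ, S z ^ 2 = (lam - 2 * z ^ 2 - 2 * z ^ 6) / 6
  mul_deriv : ∀ z ∈ Metric.closedBall (0 : ℂ) ρ, S z * S' z = -z / 3 - z ^ 5

lemma exists_isSymbolRoot {lam : ℝ} (hlam : 0 < lam) : ∃ ρ S S', IsSymbolRoot lam ρ S S' := by
  set w : ℂ → ℂ := fun z => (lam - 2 * z ^ 2 - 2 * z ^ 6) / 6 with hw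
  have hwd : Differentiable ℂ w := by fun_prop
  set U : Set ℂ := w ⁻¹' Complex.slitPlane with hU
  have hUo : IsOpen U := Complex.isOpen_slitPlane.preimage hwd.continuous
  have hU0 : (0 : ℂ) ∈ U := by
    refine Or.inl ?_
    simp only [hw]
    norm_num
    exact hlam
  obtain ⟨ρ, hρ, hρU⟩ := Metric.nhds_basis_closedBall.mem_iff.1 (hUo.mem_nhds hU0)
  have hSd : DifferentiableOn ℂ (fun z => w z ^ (1 / 2 : ℂ)) U := fun z hz =>
    (hwd z).differentiableWithinAt.cpow (differentiableWithinAt_const _) hz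
  have hsq : ∀ z, (w z ^ (1 / 2 : ℂ)) ^ 2 = w z := fun z => by
    rw [one_div]
    exact Complex.cpow_nat_inv_pow _ two_ne_zero
  have hder : ∀ z ∈ U, HasDerivAt (fun z => w z ^ (1 / 2 : ℂ))
      (deriv (fun z => w z ^ (1 / 2 : ℂ)) z) z := fun z hz =>
    (hSd.differentiableAt (hUo.mem_nhds hz)).hasDerivAt
  refine ⟨ρ, _, _, hρ, fun z hz => hder z (hρU hz), fun z hz =>
    (hSd.deriv hUo).differentiableAt (hUo.mem_nhds (hρU hz)), fun z _ => hsq z, fun z hz => ?_⟩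
  have h1 := (hder z (hρU hz)).fun_pow 2
  simp only [hsq] at h1
  have h2 : HasDerivAt w ((-(2 * (2 * z)) - 2 * (6 * z ^ 5)) / 6) z := by
    have := ((((hasDerivAt_pow 2 z).const_mul (2 : ℂ)).const_sub (lam : ℂ)).sub
      ((hasDerivAt_pow 6 z).const_mul (2 : ℂ))).div_const 6
    simpa using this
  have h3 := h1.unique h2
  simp only [Nat.add_one_sub_one, pow_one, Nat.cast_ofNat] at h3
  linear_combination h3 / 2

namespace IsSymbolRoot

variable {lam ρ : ℝ} {S S' : ℂ → ℂ}

lemma hasDerivAt_symbol (h : IsSymbolRoot lam ρ S S') {z : ℂ} (hz : z ∈ Metric.sphere (0 : ℂ) ρ) :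
    HasDerivAt (fun z => S z / z - z ^ 2) (S' z / z - S z / z ^ 2 - 2 * z) z := by
  have hz0 : z ≠ 0 := ne_zero_of_mem_sphere h.pos.ne' ⟨z, hz⟩
  have := ((h.hasDerivAt z (Metric.sphere_subset_closedBall hz)).div (hasDerivAt_id z) hz0).sub
    (hasDerivAt_pow 2 z)
  refine this.congr_deriv ?_
  simp only [id]
  field_simp
  simp
  ring

lemma diffContOnCl (h : IsSymbolRoot lam ρ S S') {f : ℂ → ℂ}
    (hf : ∀ z ∈ Metric.closedBall (0 : ℂ) ρ, DifferentiableAt ℂ f z) :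
    DiffContOnCl ℂ f (Metric.ball 0 ρ) := by
  refine DifferentiableOn.diffContOnCl fun z hz => ?_
  rw [closure_ball _ h.pos.ne'] at hz
  exact (hf z hz).differentiableWithinAt

lemma circleIntegral_side (h : IsSymbolRoot lam ρ S S') (y : ℂ) :
    (∮ z in C(0, ρ), (S' z / z - S z / z ^ 2 - 2 * z) * Complex.exp (y * (S z / z - z ^ 2))) =
      0 := by
  rcases eq_or_ne y 0 with rfl | hy
  · simp only [zero_mul, Complex.exp_zero, mul_one]
    exact circleIntegral.integral_eq_zero_of_hasDerivWithinAt h.pos.le fun z hz =>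
      (h.hasDerivAt_symbol hz).hasDerivWithinAt
  · refine circleIntegral.integral_eq_zero_of_hasDerivWithinAt
      (f := fun z => Complex.exp (y * (S z / z - z ^ 2)) / y) h.pos.le fun z hz => ?_
    refine HasDerivAt.hasDerivWithinAt
      ((((h.hasDerivAt_symbol hz).const_mul y).cexp.div_const y).congr_deriv ?_)
    field_simp

lemma hasDerivAt_gaussian (x z : ℂ) : HasDerivAt (fun z => Complex.exp (-(2 * x * z ^ 2)))
    (-(4 * x * z) * Complex.exp (-(2 * x * z ^ 2))) z := by
  refine ((hasDerivAt_pow 2 z).const_mul (2 * x)).neg.cexp.congr_deriv ?_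
  simp
  ring

lemma circleIntegral_diag (h : IsSymbolRoot lam ρ S S') (x : ℂ) :
    (∮ z in C(0, ρ), (S' z / z - S z / z ^ 2 - 2 * z) * Complex.exp (-(2 * x * z ^ 2))) = 0 := by
  have h1 : (∮ z in C(0, ρ), ((S' z / z - S z / z ^ 2 - 2 * z) * Complex.exp (-(2 * x * z ^ 2)) -
      4 * x * (S z - z ^ 3) * Complex.exp (-(2 * x * z ^ 2)))) = 0 := by
    refine circleIntegral.integral_eq_zero_of_hasDerivWithinAt
      (f := fun z => (S z / z - z ^ 2) * Complex.exp (-(2 * x * z ^ 2))) h.pos.le fun z hz => ?_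
    have hz0 : z ≠ 0 := ne_zero_of_mem_sphere h.pos.ne' ⟨z, hz⟩
    refine HasDerivAt.hasDerivWithinAt
      (((h.hasDerivAt_symbol hz).mul (hasDerivAt_gaussian x z)).congr_deriv ?_)
    field_simp
    ring
  have hd : ∀ z ∈ Metric.closedBall (0 : ℂ) ρ, DifferentiableAt ℂ
      (fun z => 4 * x * (S z - z ^ 3) * Complex.exp (-(2 * x * z ^ 2))) z := fun z hz =>
    (((h.hasDerivAt z hz).differentiableAt.sub (by fun_prop)).const_mul _).mul
      (hasDerivAt_gaussian x z).differentiableAt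
  have h2 := (h.diffContOnCl hd).circleIntegral_eq_zero h.pos.le
  have hc : ContinuousOn (fun z => (S' z / z - S z / z ^ 2 - 2 * z) *
      Complex.exp (-(2 * x * z ^ 2))) (Metric.sphere 0 ρ) := by
    intro z hz
    have hz0 : z ≠ 0 := ne_zero_of_mem_sphere h.pos.ne' ⟨z, hz⟩
    have hz' := Metric.sphere_subset_closedBall hz
    have c1 := (h.differentiableAt z hz').continuousAt
    have c2 := (h.hasDerivAt z hz').continuousAt
    refine ContinuousAt.continuousWithinAt ?_
    fun_prop (disch := simpa using hz0)
  rw [circleIntegral.integral_sub (hc.circleIntegrable h.pos.le)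
    (ContinuousOn.circleIntegrable h.pos.le fun z hz =>
      (hd z (Metric.sphere_subset_closedBall hz)).continuousAt.continuousWithinAt), h2,
    sub_zero] at h1
  exact h1

lemma circleIntegral_gaussian_div_cube (hρ : 0 < ρ) (x : ℂ) :
    (∮ z in C(0, ρ), Complex.exp (-(2 * x * z ^ 2)) / z ^ 3) =
      -(2 * x) * (2 * Real.pi * Complex.I) := by
  have h0 : ∀ z ∈ Metric.sphere (0 : ℂ) ρ, z ≠ 0 := fun z hz =>
    ne_zero_of_mem_sphere hρ.ne' ⟨z, hz⟩
  have h1 : (∮ z in C(0, ρ), (Complex.exp (-(2 * x * z ^ 2)) / z ^ 3 +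
      2 * x * ((z - 0)⁻¹ • Complex.exp (-(2 * x * z ^ 2))))) = 0 := by
    refine circleIntegral.integral_eq_zero_of_hasDerivWithinAt
      (f := fun z => -1 / 2 * (Complex.exp (-(2 * x * z ^ 2)) / z ^ 2)) hρ.le fun z hz => ?_
    have hz0 := h0 z hz
    refine ((((hasDerivAt_gaussian x z).div (hasDerivAt_pow 2 z)
      (pow_ne_zero 2 hz0)).const_mul (-1 / 2)).congr_deriv ?_).hasDerivWithinAt
    simp only [sub_zero, smul_eq_mul]
    field_simp
    push_cast
    ring
  have hg : Differentiable ℂ fun z : ℂ => Complex.exp (-(2 * x * z ^ 2)) := by fun_prop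
  have h2 := hg.diffContOnCl.circleIntegral_sub_inv_smul (Metric.mem_ball_self (x := (0 : ℂ)) hρ)
  rw [circleIntegral.integral_add, circleIntegral.integral_const_mul, h2] at h1
  · simp at h1
    linear_combination h1
  · refine ContinuousOn.circleIntegrable hρ.le fun z hz => ?_
    have hz0 := h0 z hz
    refine ContinuousAt.continuousWithinAt ?_
    fun_prop (disch := simpa using hz0)
  · refine ContinuousOn.circleIntegrable hρ.le fun z hz => ?_
    have hz0 := h0 z hz
    refine ContinuousAt.continuousWithinAt ?_
    fun_prop (disch := simpa using hz0)

lemma circleIntegral_diag_deriv (h : IsSymbolRoot lam ρ S S') (x : ℂ) :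
    (∮ z in C(0, ρ), (S' z / z - S z / z ^ 2 - 2 * z) *
      ((-z ^ 2 - S z / z) * Complex.exp (-(2 * x * z ^ 2)))) =
      -(2 * Real.pi * Complex.I) * (lam / 3 * x) := by
  have hd : ∀ z ∈ Metric.closedBall (0 : ℂ) ρ, DifferentiableAt ℂ
      (fun z => (3 * S z - z * S' z + 8 / 3 * z ^ 3) * Complex.exp (-(2 * x * z ^ 2))) z := by
    intro z hz
    have c1 := h.differentiableAt z hz
    have c2 := (h.hasDerivAt z hz).differentiableAt
    fun_prop
  have h2 := (h.diffContOnCl hd).circleIntegral_eq_zero h.pos.le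
  have h0 : ∀ z ∈ Metric.sphere (0 : ℂ) ρ, z ≠ 0 := fun z hz =>
    ne_zero_of_mem_sphere h.pos.ne' ⟨z, hz⟩
  rw [circleIntegral.integral_congr (g := fun z =>
      lam / 6 * (Complex.exp (-(2 * x * z ^ 2)) / z ^ 3) +
      (3 * S z - z * S' z + 8 / 3 * z ^ 3) * Complex.exp (-(2 * x * z ^ 2))) h.pos.le,
    circleIntegral.integral_add, h2, circleIntegral.integral_const_mul,
    circleIntegral_gaussian_div_cube h.pos]
  · ring
  · refine ContinuousOn.circleIntegrable h.pos.le fun z hz => ?_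
    have hz0 := h0 z hz
    refine ContinuousAt.continuousWithinAt ?_
    fun_prop (disch := simpa using hz0)
  · exact ContinuousOn.circleIntegrable h.pos.le fun z hz =>
      (hd z (Metric.sphere_subset_closedBall hz)).continuousAt.continuousWithinAt
  · intro z hz
    have hz0 := h0 z hz
    have e1 := h.sq z (Metric.sphere_subset_closedBall hz)
    have e2 := h.mul_deriv z (Metric.sphere_subset_closedBall hz)
    simp only
    field_simp
    linear_combination (18 : ℂ) * e1 - 18 * z * e2

end IsSymbolRoot

theorem IsInverseObserverKernel.exists {lam : ℝ} (hlam : 0 < lam) :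
    ∃ r, IsInverseObserverKernel lam r := by
  obtain ⟨ρ, S, S', h⟩ := exists_isSymbolRoot hlam
  have h0 (z : Metric.sphere (0 : ℂ) ρ) : (z : ℂ) ≠ 0 := ne_zero_of_mem_sphere h.pos.ne' z
  have hS : Continuous fun z : Metric.sphere (0 : ℂ) ρ => S z :=
    continuous_iff_continuousAt.2 fun z => ContinuousAt.comp (f := Subtype.val)
      (h.hasDerivAt z (Metric.sphere_subset_closedBall z.2)).continuousAt
      continuous_subtype_val.continuousAt
  have hS' : Continuous fun z : Metric.sphere (0 : ℂ) ρ => S' z :=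
    continuous_iff_continuousAt.2 fun z => ContinuousAt.comp (f := Subtype.val)
      (h.differentiableAt z (Metric.sphere_subset_closedBall z.2)).continuousAt
      continuous_subtype_val.continuousAt
  have hid : Continuous fun z : Metric.sphere (0 : ℂ) ρ => (z : ℂ) := continuous_subtype_val
  let P : C(Metric.sphere (0 : ℂ) ρ, ℂ) :=
    ⟨fun z => S z / z - z ^ 2, (hS.div₀ hid h0).sub (hid.pow 2)⟩
  let Q : C(Metric.sphere (0 : ℂ) ρ, ℂ) :=
    ⟨fun z => -z ^ 2 - S z / z, (hid.pow 2).neg.sub (hS.div₀ hid h0)⟩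
  let W : C(Metric.sphere (0 : ℂ) ρ, ℂ) :=
    ⟨fun z => S' z / z - S z / z ^ 2 - 2 * z, ((hS'.div₀ hid h0).sub
      (hS.div₀ (hid.pow 2) fun z => pow_ne_zero 2 (h0 z))).sub (hid.const_mul 2)⟩
  let L : C(Metric.sphere (0 : ℂ) ρ, ℂ) →L[ℝ] ℝ := Complex.reCLM ∘L
    ((-(2 * Real.pi * Complex.I)⁻¹ • (circleCLM ρ h.pos.le ∘L
      ContinuousLinearMap.mul ℂ _ W)).restrictScalars ℝ)
  have hL (F : C(Metric.sphere (0 : ℂ) ρ, ℂ)) (f : ℂ → ℂ)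
      (hF : ∀ z : Metric.sphere (0 : ℂ) ρ, F z = f z) : L F = (-(2 * Real.pi * Complex.I)⁻¹ *
        ∮ z in C(0, ρ), (S' z / z - S z / z ^ 2 - 2 * z) * f z).re := by
    rw [← circleCLM_eq h.pos.le (F := W * F) fun z => by simp [W, hF]]
    rfl
  refine ⟨expFunction Q P L, contDiff_expFunction Q P L,
    fun x y _ => expFunction_eqn ?_ L x y, fun x _ => ?_, fun x _ => ?_, fun y _ => ?_⟩
  · ext z
    have e := h.sq z (Metric.sphere_subset_closedBall z.2)
    have hz := h0 z
    simp only [P, Q, ContinuousMap.add_apply, ContinuousMap.pow_apply, ContinuousMap.coe_mk,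
      algebraMap_apply, Complex.real_smul, mul_one]
    push_cast
    field_simp
    linear_combination -6 * (z : ℂ) ^ 3 * e
  · rw [expFunction, hL _ fun z => Complex.exp (-(2 * x * z ^ 2)), h.circleIntegral_diag]
    · simp
    · intro z
      rw [ContinuousMap.exp_apply]
      simp only [P, Q, ContinuousMap.add_apply, ContinuousMap.smul_apply, ContinuousMap.coe_mk,
        Complex.real_smul]
      ring_nf
  · rw [pdx_expFunction, expFunction, ContinuousLinearMap.comp_apply,
      ContinuousLinearMap.mul_apply',
      hL _ fun z => (-z ^ 2 - S z / z) * Complex.exp (-(2 * x * z ^ 2)),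
      h.circleIntegral_diag_deriv, neg_mul (2 * _ * _), neg_mul_neg,
      inv_mul_cancel_left₀ Complex.two_pi_I_ne_zero]
    · exact_mod_cast Complex.ofReal_re (lam / 3 * x)
    · intro z
      rw [ContinuousMap.mul_apply, ContinuousMap.exp_apply]
      simp only [P, Q, ContinuousMap.add_apply, ContinuousMap.smul_apply, ContinuousMap.coe_mk,
        Complex.real_smul]
      ring_nf
  · rw [expFunction, hL _ fun z => Complex.exp (y * (S z / z - z ^ 2)), h.circleIntegral_side]
    · simp
    · intro z
      rw [ContinuousMap.exp_apply]
      simp [P]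

/-- Existence and uniqueness (as a function on `T`) of the inverse observer kernel. -/
theorem inverse_observer_kernel_exists_unique (lam : ℝ) (hlam : 0 < lam) :
    ∃ r : ℝ → ℝ → ℝ, IsInverseObserverKernel lam r ∧
      ∀ r' : ℝ → ℝ → ℝ, IsInverseObserverKernel lam r' →
        ∀ x y : ℝ, (x, y) ∈ T → r' x y = r x y := by
  obtain ⟨r, hr⟩ := IsInverseObserverKernel.exists hlam
  exact ⟨r, hr, fun r' hr' x y hxy => hr.unique hlam hr' hxy⟩
end
end

section
/- Let λ > 0, let k be a controller kernel for λ and let l be the inverse controller kernel for λ. Then for all (x,y) ∈ T, l(x,y) − k(x,y) = ∫_x^y k(x,ξ) l(ξ,y) dξ. -/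
open MeasureTheory

noncomputable section

/-- A controller kernel for `lam`. -/
def IsControllerKernel (lam : ℝ) (k : ℝ → ℝ → ℝ) : Prop :=
  ContDiff ℝ 3 (Function.uncurry k) ∧
  (∀ x y : ℝ, (x, y) ∈ T →
    pdx (pdx (pdx k)) x y + pdy (pdy (pdy k)) x y + pdx k x y + pdy k x y = -lam * k x y) ∧
  (∀ x ∈ Set.Icc (0:ℝ) 1, k x 1 = 0) ∧
  (∀ x ∈ Set.Icc (0:ℝ) 1, k x x = 0) ∧
  (∀ x ∈ Set.Icc (0:ℝ) 1, pdx k x x = lam / 3 * (1 - x))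

/-- The inverse controller kernel for `lam`. -/
def IsInverseControllerKernel (lam : ℝ) (l : ℝ → ℝ → ℝ) : Prop :=
  ContDiff ℝ 3 (Function.uncurry l) ∧
  (∀ x y : ℝ, (x, y) ∈ T →
    pdx (pdx (pdx l)) x y + pdy (pdy (pdy l)) x y + pdx l x y + pdy l x y = lam * l x y) ∧
  (∀ x ∈ Set.Icc (0:ℝ) 1, l x 1 = 0) ∧
  (∀ x ∈ Set.Icc (0:ℝ) 1, l x x = 0) ∧
  (∀ x ∈ Set.Icc (0:ℝ) 1, pdx l x x = lam / 3 * (1 - x))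

open Set Filter Topology Function

/-! ### Calculus of partial derivatives -/

lemma uncurry_pdx_s6 {f : ℝ → ℝ → ℝ} (hf : ContDiff ℝ 1 (uncurry f)) :
    uncurry (pdx f) = fun p => fderiv ℝ (uncurry f) p (1, 0) := by
  funext p
  have hc : HasDerivAt (fun r => (r, p.2)) ((1 : ℝ), (0 : ℝ)) p.1 :=
    (hasDerivAt_id p.1).prodMk (hasDerivAt_const p.1 p.2)
  exact ((hf.differentiable (by norm_num) p).hasFDerivAt.comp_hasDerivAt p.1 hc).deriv

lemma uncurry_pdy_s6 {f : ℝ → ℝ → ℝ} (hf : ContDiff ℝ 1 (uncurry f)) :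
    uncurry (pdy f) = fun p => fderiv ℝ (uncurry f) p (0, 1) := by
  funext p
  have hc : HasDerivAt (fun r => (p.1, r)) ((0 : ℝ), (1 : ℝ)) p.2 :=
    (hasDerivAt_const p.2 p.1).prodMk (hasDerivAt_id p.2)
  exact ((hf.differentiable (by norm_num) p).hasFDerivAt.comp_hasDerivAt p.2 hc).deriv

lemma hasDerivAt_comp_curve {f : ℝ → ℝ → ℝ} (hf : ContDiff ℝ 1 (uncurry f)) {u v : ℝ → ℝ}
    {u' v' s : ℝ} (hu : HasDerivAt u u' s) (hv : HasDerivAt v v' s) :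
    HasDerivAt (fun r => f (u r) (v r))
      (u' * pdx f (u s) (v s) + v' * pdy f (u s) (v s)) s := by
  have hF : HasFDerivAt (uncurry f) (fderiv ℝ (uncurry f) (u s, v s)) (u s, v s) :=
    (hf.differentiable (by norm_num) _).hasFDerivAt
  have hx := congrFun (uncurry_pdx_s6 hf) (u s, v s)
  have hy := congrFun (uncurry_pdy_s6 hf) (u s, v s)
  have h := hF.comp_hasDerivAt s (hu.prodMk hv)
  have he : (u', v') = u' • ((1 : ℝ), (0 : ℝ)) + v' • ((0 : ℝ), (1 : ℝ)) := by simp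
  rw [he, map_add, map_smul, map_smul, ← hx, ← hy] at h
  exact h

lemma hasDerivAt_fst {f : ℝ → ℝ → ℝ} (hf : ContDiff ℝ 1 (uncurry f)) (x y : ℝ) :
    HasDerivAt (fun x' => f x' y) (pdx f x y) x := by
  simpa using hasDerivAt_comp_curve hf (hasDerivAt_id x) (hasDerivAt_const x y)

lemma hasDerivAt_snd {f : ℝ → ℝ → ℝ} (hf : ContDiff ℝ 1 (uncurry f)) (x y : ℝ) :
    HasDerivAt (fun y' => f x y') (pdy f x y) y := by
  simpa using hasDerivAt_comp_curve hf (hasDerivAt_const y x) (hasDerivAt_id y)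

lemma contDiff_pdx {n : ℕ} {f : ℝ → ℝ → ℝ} (hf : ContDiff ℝ (n + 1 : ℕ) (uncurry f)) :
    ContDiff ℝ n (uncurry (pdx f)) := by
  rw [uncurry_pdx_s6 (hf.of_le (by exact_mod_cast Nat.le_add_left 1 n))]
  exact (hf.fderiv_right (m := n) (by norm_cast)).clm_apply contDiff_const

lemma contDiff_pdy {n : ℕ} {f : ℝ → ℝ → ℝ} (hf : ContDiff ℝ (n + 1 : ℕ) (uncurry f)) :
    ContDiff ℝ n (uncurry (pdy f)) := by
  rw [uncurry_pdy_s6 (hf.of_le (by exact_mod_cast Nat.le_add_left 1 n))]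
  exact (hf.fderiv_right (m := n) (by norm_cast)).clm_apply contDiff_const

lemma pdx_pdy_comm {f : ℝ → ℝ → ℝ} (hf : ContDiff ℝ 2 (uncurry f)) :
    pdx (pdy f) = pdy (pdx f) := by
  have h1 : ContDiff ℝ 1 (uncurry f) := hf.of_le (by norm_num)
  have hd : ContDiff ℝ 1 (fderiv ℝ (uncurry f)) := hf.fderiv_right (by norm_num)
  funext x y
  have hx := congrFun (uncurry_pdx_s6 (contDiff_pdy (n := 1) hf)) (x, y)
  have hy := congrFun (uncurry_pdy_s6 (contDiff_pdx (n := 1) hf)) (x, y)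
  simp only [uncurry_apply_pair] at hx hy
  have hD := (hd.differentiable (by norm_num)) (x, y)
  rw [hx, hy, uncurry_pdx_s6 h1, uncurry_pdy_s6 h1, fderiv_clm_apply hD (by fun_prop),
    fderiv_clm_apply hD (by fun_prop)]
  have hs : IsSymmSndFDerivAt ℝ (uncurry f) (x, y) :=
    hf.contDiffAt.isSymmSndFDerivAt (by simp)
  simpa using hs.eq (1, 0) (0, 1)

lemma hasFDerivAt_of_partials {f fx fy : ℝ → ℝ → ℝ}
    (hx : ∀ x y, HasDerivAt (fun x' => f x' y) (fx x y) x)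
    (hy : ∀ x y, HasDerivAt (fun y' => f x y') (fy x y) y)
    (cx : Continuous (uncurry fx)) (cy : Continuous (uncurry fy)) (p : ℝ × ℝ) :
    HasFDerivAt (uncurry f)
      (uncurry fx p • ContinuousLinearMap.fst ℝ ℝ ℝ
        + uncurry fy p • ContinuousLinearMap.snd ℝ ℝ ℝ) p := by
  have h := hasStrictFDerivAt_uncurry_coprod (𝕜 := ℝ) (u := p) (f := f)
    (f₁ := fun x y => ContinuousLinearMap.toSpanSingleton ℝ (fx x y))
    (f₂ := fun x y => ContinuousLinearMap.toSpanSingleton ℝ (fy x y))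
    (Eventually.of_forall fun v => (hx v.1 v.2).hasFDerivAt)
    (Eventually.of_forall fun v => (hy v.1 v.2).hasFDerivAt)
    (((ContinuousLinearMap.toSpanSingletonCLE (𝕜 := ℝ) (E := ℝ)).continuous.comp cx).continuousAt)
    (((ContinuousLinearMap.toSpanSingletonCLE (𝕜 := ℝ) (E := ℝ)).continuous.comp cy).continuousAt)
  refine h.hasFDerivAt.congr_fderiv ?_
  ext <;> simp [HasUncurry.uncurry, uncurry]

/-! ### Composition of kernels -/

/-- The composition `∫_x^y f(x,ξ) g(ξ,y) dξ` of two kernels. -/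
def kernelComp (f g : ℝ → ℝ → ℝ) (x y : ℝ) : ℝ := ∫ ξ in x..y, f x ξ * g ξ y

lemma hasDerivAt_integral_param {A A' : ℝ → ℝ → ℝ} (hA : Continuous (uncurry A))
    (hA' : Continuous (uncurry A')) (hd : ∀ x ξ, HasDerivAt (fun x' => A x' ξ) (A' x ξ) x)
    (a b x : ℝ) :
    HasDerivAt (fun x' => ∫ ξ in a..b, A x' ξ) (∫ ξ in a..b, A' x ξ) x := by
  obtain ⟨C, hC⟩ := (((isCompact_Icc (a := x - 1) (b := x + 1)).prod
    (isCompact_uIcc (a := a) (b := b))).image hA').isBounded.exists_norm_le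
  refine (intervalIntegral.hasDerivAt_integral_of_dominated_loc_of_deriv_le (F := A) (F' := A')
    (bound := fun _ => C) (Icc_mem_nhds (sub_one_lt x) (lt_add_one x)) ?_ ?_ ?_ ?_ ?_ ?_).2
  · exact Eventually.of_forall fun x' => (hA.uncurry_left x').aestronglyMeasurable
  · exact (hA.uncurry_left x).intervalIntegrable _ _
  · exact (hA'.uncurry_left x).aestronglyMeasurable
  · exact Eventually.of_forall fun t ht x' hx' =>
      hC _ ⟨(x', t), ⟨hx', uIoc_subset_uIcc ht⟩, rfl⟩
  · exact intervalIntegrable_const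
  · exact Eventually.of_forall fun t _ x' _ => hd x' t

lemma hasDerivAt_integral_lower {A A' : ℝ → ℝ → ℝ} (hA : Continuous (uncurry A))
    (hA' : Continuous (uncurry A')) (hd : ∀ x ξ, HasDerivAt (fun x' => A x' ξ) (A' x ξ) x)
    (b x : ℝ) :
    HasDerivAt (fun x' => ∫ ξ in x'..b, A x' ξ) (-A x x + ∫ ξ in x..b, A' x ξ) x := by
  have c1 : Continuous (uncurry fun x' a => ∫ ξ in a..b, A' x' ξ) := by
    have h0 : (uncurry fun x' a => ∫ ξ in a..b, A' x' ξ)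
        = fun p : ℝ × ℝ => -∫ ξ in b..p.2, A' p.1 ξ := by
      funext p; exact intervalIntegral.integral_symm _ _
    rw [h0]
    exact (intervalIntegral.continuous_parametric_intervalIntegral_of_continuous
      (f := fun (p : ℝ × ℝ) ξ => A' p.1 ξ) (by fun_prop) continuous_snd).neg
  have h := hasFDerivAt_of_partials (f := fun x' a => ∫ ξ in a..b, A x' ξ)
    (fx := fun x' a => ∫ ξ in a..b, A' x' ξ) (fy := fun x' a => -A x' a)
    (fun x' a => hasDerivAt_integral_param hA hA' hd a b x')
    (fun x' a => intervalIntegral.integral_hasDerivAt_left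
      ((hA.uncurry_left x').intervalIntegrable _ _)
      ((hA.uncurry_left x').stronglyMeasurableAtFilter _ _)
      (hA.uncurry_left x').continuousAt) c1 hA.neg (x, x)
  have hc : HasDerivAt (fun r : ℝ => (r, r)) (1, 1) x :=
    (hasDerivAt_id x).prodMk (hasDerivAt_id x)
  refine (HasFDerivAt.comp_hasDerivAt (f := fun r : ℝ => (r, r)) x h hc).congr_deriv ?_
  simp [uncurry, add_comm]

lemma kernelComp_swap (f g : ℝ → ℝ → ℝ) (x y : ℝ) :
    kernelComp f g x y = -∫ ξ in y..x, g ξ y * f x ξ := by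
  simp only [kernelComp, mul_comm]
  exact intervalIntegral.integral_symm _ _

lemma continuous_kernelComp {f g : ℝ → ℝ → ℝ} (hf : Continuous (uncurry f))
    (hg : Continuous (uncurry g)) : Continuous (uncurry (kernelComp f g)) := by
  have h0 : uncurry (kernelComp f g) = fun p : ℝ × ℝ =>
      (∫ ξ in (0:ℝ)..p.2, f p.1 ξ * g ξ p.2) - ∫ ξ in (0:ℝ)..p.1, f p.1 ξ * g ξ p.2 := by
    funext p
    have hc : Continuous fun ξ => f p.1 ξ * g ξ p.2 := by fun_prop
    exact (intervalIntegral.integral_interval_sub_left (hc.intervalIntegrable _ _)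
      (hc.intervalIntegrable _ _)).symm
  rw [h0]
  have hc : Continuous (uncurry fun (p : ℝ × ℝ) ξ => f p.1 ξ * g ξ p.2) := by fun_prop
  exact (intervalIntegral.continuous_parametric_intervalIntegral_of_continuous hc
    continuous_snd).sub
    (intervalIntegral.continuous_parametric_intervalIntegral_of_continuous hc continuous_fst)

lemma hasDerivAt_kernelComp_fst {f g : ℝ → ℝ → ℝ} (hf : ContDiff ℝ 1 (uncurry f))
    (hg : Continuous (uncurry g)) (x y : ℝ) :
    HasDerivAt (fun x' => kernelComp f g x' y)
      (-(f x x * g x y) + kernelComp (pdx f) g x y) x := by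
  have hf0 := hf.continuous
  have hf1 : Continuous (uncurry (pdx f)) := (contDiff_pdx (n := 0) hf).continuous
  exact hasDerivAt_integral_lower (A := fun x' ξ => f x' ξ * g ξ y)
    (A' := fun x' ξ => pdx f x' ξ * g ξ y) (by fun_prop) (by fun_prop)
    (fun x' ξ => (hasDerivAt_fst hf x' ξ).mul_const _) y x

lemma hasDerivAt_kernelComp_snd {f g : ℝ → ℝ → ℝ} (hf : Continuous (uncurry f))
    (hg : ContDiff ℝ 1 (uncurry g)) (x y : ℝ) :
    HasDerivAt (fun y' => kernelComp f g x y')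
      (f x y * g y y + kernelComp f (pdy g) x y) y := by
  have hg0 := hg.continuous
  have hg1 : Continuous (uncurry (pdy g)) := (contDiff_pdy (n := 0) hg).continuous
  have h := (hasDerivAt_integral_lower (A := fun y' ξ => g ξ y' * f x ξ)
    (A' := fun y' ξ => pdy g ξ y' * f x ξ) (by fun_prop) (by fun_prop)
    (fun y' ξ => (hasDerivAt_snd hg ξ y').mul_const _) x y).neg
  simp only [kernelComp_swap]
  refine h.congr_deriv ?_
  ring

lemma contDiff_kernelComp (n : ℕ) : ∀ {f g : ℝ → ℝ → ℝ}, ContDiff ℝ n (uncurry f) →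
    ContDiff ℝ n (uncurry g) → ContDiff ℝ n (uncurry (kernelComp f g)) := by
  induction n with
  | zero =>
    intro f g hf hg
    exact contDiff_zero.2 (continuous_kernelComp hf.continuous hg.continuous)
  | succ n ih =>
    intro f g hf hg
    have hle : ((n : ℕ) : WithTop ℕ∞) ≤ (n + 1 : ℕ) := by exact_mod_cast Nat.le_succ n
    have hle1 : (1 : WithTop ℕ∞) ≤ (n + 1 : ℕ) := by exact_mod_cast Nat.le_add_left 1 n
    have hfn := hf.of_le hle
    have hgn := hg.of_le hle
    have cx : ContDiff ℝ n (uncurry fun x y => -(f x x * g x y) + kernelComp (pdx f) g x y) :=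
      ((hfn.comp (contDiff_fst.prodMk contDiff_fst)).mul hgn).neg.add
        (ih (contDiff_pdx hf) hgn)
    have cy : ContDiff ℝ n (uncurry fun x y => f x y * g y y + kernelComp f (pdy g) x y) :=
      (hfn.mul (hgn.comp (contDiff_snd.prodMk contDiff_snd))).add
        (ih hfn (contDiff_pdy hg))
    have hd := hasFDerivAt_of_partials
      (hasDerivAt_kernelComp_fst (hf.of_le hle1) hg.continuous)
      (hasDerivAt_kernelComp_snd hf.continuous (hg.of_le hle1)) cx.continuous cy.continuous
    rw [show ((n + 1 : ℕ) : WithTop ℕ∞) = (n : WithTop ℕ∞) + 1 by norm_cast,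
      contDiff_succ_iff_hasFDerivAt]
    exact ⟨_, (cx.smul contDiff_const).add (cy.smul contDiff_const), hd⟩

/-! ### Unique continuation for the Helmholtz equation -/

lemma second_deriv_nonpos_of_isLocalMax {g g₁ : ℝ → ℝ} {c s : ℝ}
    (hg : ∀ r, HasDerivAt g (g₁ r) r) (hg₁ : HasDerivAt g₁ c s) (hmax : IsLocalMax g s) :
    c ≤ 0 := by
  by_contra! hc
  have hd : deriv g = g₁ := funext fun r => (hg r).deriv
  have hmin : IsLocalMin g s := by
    refine isLocalMin_of_deriv_deriv_pos ?_ ?_ (hg s).continuousAt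
    · rw [hd, hg₁.deriv]; exact hc
    · exact hmax.deriv_eq_zero
  have hconst : g =ᶠ[𝓝 s] fun _ => g s := by
    filter_upwards [hmin, hmax] with r h₁ h₂ using le_antisymm h₂ h₁
  have h₁ : g₁ =ᶠ[𝓝 s] fun _ => 0 := by
    have := hconst.deriv
    rw [hd] at this
    simpa using this
  have := hg₁.unique ((hasDerivAt_const s (0 : ℝ)).congr_of_eventuallyEq h₁)
  exact hc.ne' this

lemma weighted_max_inequality {e e₁ φ φ₁ : ℝ → ℝ} {e₂ φ₂ s : ℝ}
    (he : ∀ r, HasDerivAt e (e₁ r) r) (he₁ : HasDerivAt e₁ e₂ s)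
    (hφ : ∀ r, HasDerivAt φ (φ₁ r) r) (hφ₁ : HasDerivAt φ₁ φ₂ s) (hpos : 0 < e s)
    (hmax : IsLocalMax (fun r => e r * Real.exp (φ r)) s) :
    e s * e₂ - e₁ s ^ 2 + φ₂ * e s ^ 2 ≤ 0 := by
  have hg : ∀ r, HasDerivAt (fun r => e r * Real.exp (φ r))
      ((e₁ r + e r * φ₁ r) * Real.exp (φ r)) r := fun r =>
    ((he r).mul (hφ r).exp).congr_deriv (by ring)
  have hg₁ := (he₁.add ((he s).mul hφ₁)).mul (hφ s).exp
  have h0 : e₁ s + e s * φ₁ s = 0 := by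
    have := hmax.hasDerivAt_eq_zero (hg s)
    simpa [Real.exp_ne_zero] using this
  have h2 := second_deriv_nonpos_of_isLocalMax hg hg₁ hmax
  have h3 : (e₂ + (e₁ s * φ₁ s + e s * φ₂)) * Real.exp (φ s) ≤ 0 := by
    refine le_trans (le_of_eq ?_) h2
    simp only [Pi.add_apply, Pi.mul_apply]
    rw [h0]; ring
  have h4 : e₂ + (e₁ s * φ₁ s + e s * φ₂) ≤ 0 := nonpos_of_mul_nonpos_left h3 (Real.exp_pos _)
  have h5 : e₁ s = -(e s * φ₁ s) := by linarith
  have h6 := mul_nonpos_of_nonneg_of_nonpos hpos.le h4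
  rw [h5] at h6 ⊢
  linarith

/-- The energy density of `v` for the operator `∂ₓₓ - ∂ₓᵧ + ∂ᵧᵧ + 1`. -/
def energyDensity (v : ℝ → ℝ → ℝ) (x y : ℝ) : ℝ :=
  v x y ^ 2 / 2 + pdx v x y ^ 2 - pdx v x y * pdy v x y + pdy v x y ^ 2

/-- At an interior maximum of the weighted energy density, the second derivative test along the
direction `(a, b)`. -/
lemma energyDensity_directional {v : ℝ → ℝ → ℝ} (hv : ContDiff ℝ 3 (uncurry v)) {x y τ c : ℝ}
    (hpos : 0 < energyDensity v x y)
    (hmax : IsLocalMax (fun p : ℝ × ℝ => energyDensity v p.1 p.2 *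
      Real.exp (τ * (p.1 * (c - p.2)))) (x, y)) (a b : ℝ) :
    ∀ V p q r s t α β γ δ : ℝ, V = v x y → p = pdx v x y → q = pdy v x y →
      r = pdx (pdx v) x y → s = pdx (pdy v) x y → t = pdy (pdy v) x y →
      α = pdx (pdx (pdx v)) x y → β = pdx (pdx (pdy v)) x y → γ = pdx (pdy (pdy v)) x y →
      δ = pdy (pdy (pdy v)) x y →
      (V ^ 2 / 2 + p ^ 2 - p * q + q ^ 2) *
        ((a * p + b * q) ^ 2 + V * (a * (a * r + b * s) + b * (a * s + b * t))
          + 2 * (a * r + b * s) ^ 2 + 2 * p * (a * (a * α + b * β) + b * (a * β + b * γ))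
          - (a * (a * α + b * β) + b * (a * β + b * γ)) * q - 2 * (a * r + b * s) * (a * s + b * t)
          - p * (a * (a * β + b * γ) + b * (a * γ + b * δ))
          + 2 * (a * s + b * t) ^ 2 + 2 * q * (a * (a * β + b * γ) + b * (a * γ + b * δ)))
      - (V * (a * p + b * q) + 2 * p * (a * r + b * s) - (a * r + b * s) * q - p * (a * s + b * t)
          + 2 * q * (a * s + b * t)) ^ 2
      + τ * (-2 * a * b) * (V ^ 2 / 2 + p ^ 2 - p * q + q ^ 2) ^ 2 ≤ 0 := by
  rintro V p q r s t α β γ δ rfl rfl rfl rfl rfl rfl rfl rfl rfl rfl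
  have hx := contDiff_pdx (n := 2) hv
  have hy := contDiff_pdy (n := 2) hv
  have hxx := contDiff_pdx (n := 1) hx
  have hxy := contDiff_pdx (n := 1) hy
  have hyy := contDiff_pdy (n := 1) hy
  have c1 : pdy (pdx v) = pdx (pdy v) := (pdx_pdy_comm (hv.of_le (by norm_num))).symm
  have c2 : pdy (pdx (pdx v)) = pdx (pdx (pdy v)) := by rw [← pdx_pdy_comm hx, c1]
  have c3 : pdy (pdx (pdy v)) = pdx (pdy (pdy v)) := (pdx_pdy_comm hy).symm
  have lx : ∀ w, HasDerivAt (fun w : ℝ => x + w * a) a w := fun w => by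
    simpa using ((hasDerivAt_id w).mul_const a).const_add x
  have ly : ∀ w, HasDerivAt (fun w : ℝ => y + w * b) b w := fun w => by
    simpa using ((hasDerivAt_id w).mul_const b).const_add y
  have dV := fun w => hasDerivAt_comp_curve (hv.of_le (by norm_num)) (lx w) (ly w)
  have dp := fun w => hasDerivAt_comp_curve (hx.of_le (by norm_num)) (lx w) (ly w)
  have dq := fun w => hasDerivAt_comp_curve (hy.of_le (by norm_num)) (lx w) (ly w)
  have dr := fun w => hasDerivAt_comp_curve hxx (lx w) (ly w)
  have ds := fun w => hasDerivAt_comp_curve hxy (lx w) (ly w)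
  have dt := fun w => hasDerivAt_comp_curve hyy (lx w) (ly w)
  rw [c1] at dp
  rw [c2] at dr
  rw [c3] at ds
  obtain ⟨V, hV⟩ : ∃ V : ℝ → ℝ, V = fun w => v (x + w * a) (y + w * b) := ⟨_, rfl⟩
  obtain ⟨p, hp⟩ : ∃ p : ℝ → ℝ, p = fun w => pdx v (x + w * a) (y + w * b) := ⟨_, rfl⟩
  obtain ⟨q, hq⟩ : ∃ q : ℝ → ℝ, q = fun w => pdy v (x + w * a) (y + w * b) := ⟨_, rfl⟩
  obtain ⟨V₁, hV₁⟩ : ∃ V₁ : ℝ → ℝ, V₁ = fun w => a * pdx v (x + w * a) (y + w * b)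
    + b * pdy v (x + w * a) (y + w * b) := ⟨_, rfl⟩
  obtain ⟨p₁, hp₁⟩ : ∃ p₁ : ℝ → ℝ, p₁ = fun w => a * pdx (pdx v) (x + w * a) (y + w * b)
    + b * pdx (pdy v) (x + w * a) (y + w * b) := ⟨_, rfl⟩
  obtain ⟨q₁, hq₁⟩ : ∃ q₁ : ℝ → ℝ, q₁ = fun w => a * pdx (pdy v) (x + w * a) (y + w * b)
    + b * pdy (pdy v) (x + w * a) (y + w * b) := ⟨_, rfl⟩
  have dV₁ := ((dp 0).const_mul a).add ((dq 0).const_mul b)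
  have dp₁ := ((dr 0).const_mul a).add ((ds 0).const_mul b)
  have dq₁ := ((ds 0).const_mul a).add ((dt 0).const_mul b)
  replace dV : ∀ w, HasDerivAt V (V₁ w) w := by rw [hV, hV₁]; exact dV
  replace dp : ∀ w, HasDerivAt p (p₁ w) w := by rw [hp, hp₁]; exact dp
  replace dq : ∀ w, HasDerivAt q (q₁ w) w := by rw [hq, hq₁]; exact dq
  replace dV₁ := dV₁.congr_of_eventuallyEq (EventuallyEq.of_eq hV₁)
  replace dp₁ := dp₁.congr_of_eventuallyEq (EventuallyEq.of_eq hp₁)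
  replace dq₁ := dq₁.congr_of_eventuallyEq (EventuallyEq.of_eq hq₁)
  have he : ∀ w, HasDerivAt (fun w => V w ^ 2 / 2 + p w ^ 2 - p w * q w + q w ^ 2)
      (V w * V₁ w + 2 * (p w * p₁ w) - (p₁ w * q w + p w * q₁ w) + 2 * (q w * q₁ w)) w := by
    intro w
    refine ((((((dV w).pow 2).div_const 2).add ((dp w).pow 2)).sub
      ((dp w).mul (dq w))).add ((dq w).pow 2)).congr_deriv ?_
    ring
  have he₁ := ((((dV 0).mul dV₁).add (((dp 0).mul dp₁).const_mul 2)).sub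
    ((dp₁.mul (dq 0)).add ((dp 0).mul dq₁))).add (((dq 0).mul dq₁).const_mul 2)
  have hφ : ∀ w, HasDerivAt (fun w => τ * ((x + w * a) * (c - (y + w * b))))
      (τ * (a * (c - (y + w * b)) + (x + w * a) * -b)) w := fun w =>
    ((lx w).mul ((ly w).const_sub c)).const_mul τ
  have hφ₁ := ((((ly 0).const_sub c).const_mul a).add ((lx 0).mul_const (-b))).const_mul τ
  have hmax' : IsLocalMax (fun w => (V w ^ 2 / 2 + p w ^ 2 - p w * q w + q w ^ 2) *
      Real.exp (τ * ((x + w * a) * (c - (y + w * b))))) 0 := by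
    have hcont : ContinuousAt (fun w : ℝ => (x + w * a, y + w * b)) 0 := by fun_prop
    have hmax0 : IsLocalMax (fun p : ℝ × ℝ => energyDensity v p.1 p.2 *
      Real.exp (τ * (p.1 * (c - p.2)))) (x + 0 * a, y + 0 * b) := by simpa using hmax
    rw [hV, hp, hq]
    exact hcont.eventually hmax0
  have hpos' : 0 < V 0 ^ 2 / 2 + p 0 ^ 2 - p 0 * q 0 + q 0 ^ 2 := by
    rw [hV, hp, hq]
    simpa [energyDensity] using hpos
  have key := weighted_max_inequality he he₁ hφ hφ₁ hpos' hmax'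
  simp only [hV, hp, hq, hV₁, hp₁, hq₁, zero_mul, add_zero] at key
  refine le_trans (le_of_eq ?_) key
  ring

/-- The weighted energy density of a solution of `vₓₓ - vₓᵧ + vᵧᵧ + v = 0` has no positive
interior maximum. -/
lemma not_isLocalMax_weighted_energyDensity {v : ℝ → ℝ → ℝ} (hv : ContDiff ℝ 3 (uncurry v))
    {x y τ c : ℝ} (hτ : 1 < τ)
    (hpde : ∀ᶠ z in 𝓝 (x, y), pdx (pdx v) z.1 z.2 - pdx (pdy v) z.1 z.2
      + pdy (pdy v) z.1 z.2 + v z.1 z.2 = 0)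
    (hpos : 0 < energyDensity v x y) :
    ¬ IsLocalMax (fun p : ℝ × ℝ => energyDensity v p.1 p.2 *
      Real.exp (τ * (p.1 * (c - p.2)))) (x, y) := by
  intro hmax
  have hx := contDiff_pdx (n := 2) hv
  have hy := contDiff_pdy (n := 2) hv
  have hxx := contDiff_pdx (n := 1) hx
  have hxy := contDiff_pdx (n := 1) hy
  have hyy := contDiff_pdy (n := 1) hy
  have hv1 : ContDiff ℝ 1 (uncurry v) := hv.of_le (by norm_num)
  have c1 : pdy (pdx v) = pdx (pdy v) := (pdx_pdy_comm (hv.of_le (by norm_num))).symm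
  have c2 : pdy (pdx (pdx v)) = pdx (pdx (pdy v)) := by rw [← pdx_pdy_comm hx, c1]
  have c3 : pdy (pdx (pdy v)) = pdx (pdy (pdy v)) := (pdx_pdy_comm hy).symm
  have e0 := hpde.self_of_nhds
  have e1 : pdx (pdx (pdx v)) x y - pdx (pdx (pdy v)) x y + pdx (pdy (pdy v)) x y
      + pdx v x y = 0 := by
    have h := (((hasDerivAt_fst hxx x y).sub (hasDerivAt_fst hxy x y)).add
      (hasDerivAt_fst hyy x y)).add (hasDerivAt_fst hv1 x y)
    refine h.unique ((hasDerivAt_const x (0 : ℝ)).congr_of_eventuallyEq ?_)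
    have hc : ContinuousAt (fun x' : ℝ => (x', y)) x := by fun_prop
    exact hc.eventually hpde
  have e2 : pdx (pdx (pdy v)) x y - pdx (pdy (pdy v)) x y + pdy (pdy (pdy v)) x y
      + pdy v x y = 0 := by
    have h := (((hasDerivAt_snd hxx x y).sub (hasDerivAt_snd hxy x y)).add
      (hasDerivAt_snd hyy x y)).add (hasDerivAt_snd hv1 x y)
    rw [c2, c3] at h
    refine h.unique ((hasDerivAt_const y (0 : ℝ)).congr_of_eventuallyEq ?_)
    have hc : ContinuousAt (fun y' : ℝ => (x, y')) y := by fun_prop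
    exact hc.eventually hpde
  have k := fun a b => energyDensity_directional hv hpos hmax a b _ _ _ _ _ _ _ _ _ _
    rfl rfl rfl rfl rfl rfl rfl rfl rfl rfl
  have k1 := k 1 0
  have k2 := k 0 1
  have k3 := k 1 (-1)
  clear k
  unfold energyDensity at hpos
  simp only at e0
  generalize v x y = V at *
  generalize pdx v x y = p at *
  generalize pdy v x y = q at *
  generalize pdx (pdx v) x y = r at *
  generalize pdx (pdy v) x y = s at *
  generalize pdy (pdy v) x y = t at *
  generalize pdx (pdx (pdx v)) x y = α at *
  generalize pdx (pdx (pdy v)) x y = β at *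
  generalize pdx (pdy (pdy v)) x y = γ at *
  generalize pdy (pdy (pdy v)) x y = δ at *
  obtain rfl : V = -(r - s + t) := by linarith
  obtain rfl : p = -(α - β + γ) := by linarith
  obtain rfl : q = -(β - γ + δ) := by linarith
  set p := -(α - β + γ) with hp
  set q := -(β - γ + δ) with hq
  set V := -(r - s + t) with hV
  have hR : 0 ≤ V ^ 2 * (((r - s - t / 2) / 2) ^ 2 + 3 / 4 * (s - t / 2) ^ 2) := by positivity
  have hE : 0 < (τ - 1) * (V ^ 2 / 2 + p ^ 2 - p * q + q ^ 2) ^ 2 :=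
    mul_pos (by linarith) (pow_pos hpos 2)
  have hEV : 0 ≤ (V ^ 2 / 2 + p ^ 2 - p * q + q ^ 2) * V ^ 2 := by positivity
  have : 2 * (V ^ 2 * (((r - s - t / 2) / 2) ^ 2 + 3 / 4 * (s - t / 2) ^ 2))
      + (τ - 1) * (V ^ 2 / 2 + p ^ 2 - p * q + q ^ 2) ^ 2
      + (V ^ 2 / 2 + p ^ 2 - p * q + q ^ 2) * V ^ 2 / 2 ≤ 0 := by
    have := add_nonpos (add_nonpos k1 k2) k3
    refine le_trans (le_of_eq ?_) (div_nonpos_of_nonpos_of_nonneg this (zero_le_two))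
    rw [hp, hq, hV]
    ring
  linarith

/-- Uniqueness for the Cauchy problem on the diagonal for `vₓₓ - vₓᵧ + vᵧᵧ + v = 0`. -/
lemma eq_zero_of_cauchy_data_diagonal {v : ℝ → ℝ → ℝ} (hv : ContDiff ℝ 3 (uncurry v)) {c : ℝ}
    (hpde : ∀ x y, 0 < x → x < y → y < c → pdx (pdx v) x y - pdx (pdy v) x y
      + pdy (pdy v) x y + v x y = 0)
    (hdiag : ∀ x, 0 < x → x < c → v x x = 0 ∧ pdx v x x = 0 ∧ pdy v x x = 0)
    {x y : ℝ} (h0 : 0 < x) (hxy : x < y) (hyc : y < c) : v x y = 0 := by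
  by_contra hne
  have hnn : ∀ x y, v x y ^ 2 / 2 ≤ energyDensity v x y := fun x y => by
    unfold energyDensity
    nlinarith [sq_nonneg (pdx v x y - pdy v x y), sq_nonneg (pdx v x y), sq_nonneg (pdy v x y)]
  have hpos : 0 < energyDensity v x y := lt_of_lt_of_le (by positivity) (hnn x y)
  have hv0 := hv.continuous
  have hx := (contDiff_pdx (n := 2) hv).continuous
  have hy := (contDiff_pdy (n := 2) hv).continuous
  have hEc : Continuous fun p : ℝ × ℝ => energyDensity v p.1 p.2 := by
    unfold energyDensity
    fun_prop
  let K : Set (ℝ × ℝ) := {p | 0 ≤ p.1 ∧ p.1 ≤ p.2 ∧ p.2 ≤ c}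
  have hK : IsCompact K := by
    refine (isCompact_Icc (a := ((0 : ℝ), (0 : ℝ))) (b := (c, c))).of_isClosed_subset ?_ ?_
    · exact (isClosed_le continuous_const continuous_fst).inter
        ((isClosed_le continuous_fst continuous_snd).inter
          (isClosed_le continuous_snd continuous_const))
    · rintro p ⟨h1, h2, h3⟩
      exact ⟨⟨h1, h1.trans h2⟩, ⟨h2.trans h3, h3⟩⟩
  have hmem : (x, y) ∈ K := ⟨h0.le, hxy.le, hyc.le⟩
  obtain ⟨M, hM⟩ := (hK.image hEc).bddAbove
  obtain ⟨τ, hτ1, hτ⟩ : ∃ τ : ℝ, 1 < τ ∧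
      M < energyDensity v x y * Real.exp (τ * (x * (c - y))) := by
    have ht : Tendsto (fun τ : ℝ => energyDensity v x y * Real.exp (τ * (x * (c - y))))
        atTop atTop :=
      (Real.tendsto_exp_atTop.comp (tendsto_id.atTop_mul_const
        (mul_pos h0 (sub_pos.2 hyc)))).const_mul_atTop hpos
    exact ((eventually_gt_atTop 1).and (ht.eventually_gt_atTop M)).exists
  obtain ⟨⟨a, b⟩, ⟨ha, hab, hb⟩, hmax⟩ := hK.exists_isMaxOn ⟨_, hmem⟩
    (f := fun p : ℝ × ℝ => energyDensity v p.1 p.2 * Real.exp (τ * (p.1 * (c - p.2))))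
    (by fun_prop)
  have hab_mem : (a, b) ∈ K := ⟨ha, hab, hb⟩
  have hle : energyDensity v x y * Real.exp (τ * (x * (c - y)))
      ≤ energyDensity v a b * Real.exp (τ * (a * (c - b))) := hmax hmem
  simp only at ha hab hb
  have hEpos : 0 < energyDensity v a b :=
    pos_of_mul_pos_left ((mul_pos hpos (Real.exp_pos _)).trans_le hle) (Real.exp_pos _).le
  have hbound : a * (c - b) ≠ 0 := by
    intro h
    rw [h, mul_zero, Real.exp_zero, mul_one] at hle
    have := hM (mem_image_of_mem _ hab_mem)
    simp only at this
    linarith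
  have ha' : 0 < a := lt_of_le_of_ne ha fun h => hbound (by rw [← h, zero_mul])
  have hb' : b < c := lt_of_le_of_ne hb fun h => hbound (by rw [h, sub_self, mul_zero])
  have hab' : a < b := by
    refine lt_of_le_of_ne hab ?_
    rintro rfl
    obtain ⟨h1, h2, h3⟩ := hdiag a ha' hb'
    simp [energyDensity, h1, h2, h3] at hEpos
  have hnhds : ∀ᶠ p : ℝ × ℝ in 𝓝 (a, b), 0 < p.1 ∧ p.1 < p.2 ∧ p.2 < c :=
    (continuousAt_const.eventually_lt continuousAt_fst ha').and
      ((continuousAt_fst.eventually_lt continuousAt_snd hab').and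
        (continuousAt_snd.eventually_lt continuousAt_const hb'))
  refine not_isLocalMax_weighted_energyDensity hv hτ1 (c := c) ?_ hEpos ?_
  · filter_upwards [hnhds] with p hp using hpde _ _ hp.1 hp.2.1 hp.2.2
  · filter_upwards [hnhds] with p hp using hmax ⟨hp.1.le, hp.2.1.le, hp.2.2.le⟩

/-! ### The reciprocity defect -/

lemma pdx_sub {f g : ℝ → ℝ → ℝ} (hf : ContDiff ℝ 1 (uncurry f)) (hg : ContDiff ℝ 1 (uncurry g)) :
    pdx (fun x y => f x y - g x y) = fun x y => pdx f x y - pdx g x y := by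
  funext x y
  exact ((hasDerivAt_fst hf x y).sub (hasDerivAt_fst hg x y)).deriv

lemma pdy_sub {f g : ℝ → ℝ → ℝ} (hf : ContDiff ℝ 1 (uncurry f)) (hg : ContDiff ℝ 1 (uncurry g)) :
    pdy (fun x y => f x y - g x y) = fun x y => pdy f x y - pdy g x y := by
  funext x y
  exact ((hasDerivAt_snd hf x y).sub (hasDerivAt_snd hg x y)).deriv

lemma pdx_sub_sub {f g h : ℝ → ℝ → ℝ} (hf : ContDiff ℝ 1 (uncurry f))
    (hg : ContDiff ℝ 1 (uncurry g)) (hh : ContDiff ℝ 1 (uncurry h)) :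
    pdx (fun x y => f x y - g x y - h x y) = fun x y => pdx f x y - pdx g x y - pdx h x y := by
  funext x y
  exact (((hasDerivAt_fst hf x y).sub (hasDerivAt_fst hg x y)).sub (hasDerivAt_fst hh x y)).deriv

lemma pdy_sub_sub {f g h : ℝ → ℝ → ℝ} (hf : ContDiff ℝ 1 (uncurry f))
    (hg : ContDiff ℝ 1 (uncurry g)) (hh : ContDiff ℝ 1 (uncurry h)) :
    pdy (fun x y => f x y - g x y - h x y) = fun x y => pdy f x y - pdy g x y - pdy h x y := by
  funext x y
  exact (((hasDerivAt_snd hf x y).sub (hasDerivAt_snd hg x y)).sub (hasDerivAt_snd hh x y)).deriv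

lemma pdx_shift (f : ℝ → ℝ → ℝ) (d : ℝ) :
    pdx (fun x y => f (x + d) (y + d)) = fun x y => pdx f (x + d) (y + d) := by
  funext x y
  exact deriv_comp_add_const (fun x' => f x' (y + d)) d x

lemma pdy_shift (f : ℝ → ℝ → ℝ) (d : ℝ) :
    pdy (fun x y => f (x + d) (y + d)) = fun x y => pdy f (x + d) (y + d) := by
  funext x y
  exact deriv_comp_add_const (fun y' => f (x + d) y') d y

lemma hasDerivAt_diagonal {f : ℝ → ℝ → ℝ} (hf : ContDiff ℝ 1 (uncurry f)) (x : ℝ) :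
    HasDerivAt (fun r => f r r) (pdx f x x + pdy f x x) x := by
  simpa using hasDerivAt_comp_curve hf (hasDerivAt_id x) (hasDerivAt_id x)

lemma pdx_add_pdy_diagonal {f : ℝ → ℝ → ℝ} (hf : ContDiff ℝ 1 (uncurry f))
    (h0 : ∀ x ∈ Icc (0:ℝ) 1, f x x = 0) {x : ℝ} (hx : x ∈ Ioo (0:ℝ) 1) :
    pdx f x x + pdy f x x = 0 := by
  refine (hasDerivAt_diagonal hf x).unique
    ((hasDerivAt_const x (0 : ℝ)).congr_of_eventuallyEq ?_)
  filter_upwards [Ioo_mem_nhds hx.1 hx.2] with r hr using h0 r (Ioo_subset_Icc_self hr)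

lemma diagonal_second_derivatives {lam : ℝ} {f : ℝ → ℝ → ℝ} (hf : ContDiff ℝ 3 (uncurry f))
    (h0 : ∀ x ∈ Icc (0:ℝ) 1, f x x = 0)
    (h1 : ∀ x ∈ Icc (0:ℝ) 1, pdx f x x = lam / 3 * (1 - x)) {x : ℝ} (hx : x ∈ Ioo (0:ℝ) 1) :
    pdx (pdx f) x x + pdx (pdy f) x x = -(lam / 3) ∧
      pdx (pdy f) x x + pdy (pdy f) x x = lam / 3 := by
  have hfx := contDiff_pdx (n := 2) hf
  have hfy := contDiff_pdy (n := 2) hf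
  have hcomm := pdx_pdy_comm (hf.of_le (by norm_num : (2 : WithTop ℕ∞) ≤ 3))
  have hlin : HasDerivAt (fun r : ℝ => lam / 3 * (1 - r)) (-(lam / 3)) x := by
    simpa using ((hasDerivAt_id x).const_sub 1).const_mul (lam / 3)
  constructor
  · rw [hcomm]
    refine (hasDerivAt_diagonal (hfx.of_le (by norm_num)) x).unique
      (hlin.congr_of_eventuallyEq ?_)
    filter_upwards [Ioo_mem_nhds hx.1 hx.2] with r hr using h1 r (Ioo_subset_Icc_self hr)
  · refine (hasDerivAt_diagonal (hfy.of_le (by norm_num)) x).unique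
      ((hlin.neg.congr_deriv (neg_neg _)).congr_of_eventuallyEq ?_)
    filter_upwards [Ioo_mem_nhds hx.1 hx.2] with r hr
    have := pdx_add_pdy_diagonal (hf.of_le (by norm_num)) h0 hr
    rw [h1 r (Ioo_subset_Icc_self hr)] at this
    simp only [Pi.neg_apply]
    linarith

lemma pdx_kernelComp {k l : ℝ → ℝ → ℝ} (hk : ContDiff ℝ 1 (uncurry k))
    (hl : Continuous (uncurry l)) (hk0 : ∀ x ∈ Icc (0:ℝ) 1, k x x = 0) {x : ℝ}
    (hx : x ∈ Ioo (0:ℝ) 1) (y : ℝ) :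
    pdx (kernelComp k l) x y = kernelComp (pdx k) l x y := by
  refine (hasDerivAt_kernelComp_fst hk hl x y).deriv.trans ?_
  rw [hk0 x (Ioo_subset_Icc_self hx)]
  ring

lemma pdy_kernelComp {k l : ℝ → ℝ → ℝ} (hk : Continuous (uncurry k))
    (hl : ContDiff ℝ 1 (uncurry l)) (hl0 : ∀ x ∈ Icc (0:ℝ) 1, l x x = 0) (x : ℝ) {y : ℝ}
    (hy : y ∈ Ioo (0:ℝ) 1) :
    pdy (kernelComp k l) x y = kernelComp k (pdy l) x y := by
  refine (hasDerivAt_kernelComp_snd hk hl x y).deriv.trans ?_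
  rw [hl0 y (Ioo_subset_Icc_self hy)]
  ring

lemma pdx_pdx_pdx_kernelComp {lam : ℝ} {k l : ℝ → ℝ → ℝ} (hk : ContDiff ℝ 3 (uncurry k))
    (hl : ContDiff ℝ 1 (uncurry l)) (hk0 : ∀ x ∈ Icc (0:ℝ) 1, k x x = 0)
    (hk1 : ∀ x ∈ Icc (0:ℝ) 1, pdx k x x = lam / 3 * (1 - x)) {x : ℝ}
    (hx : x ∈ Ioo (0:ℝ) 1) (y : ℝ) :
    pdx (pdx (pdx (kernelComp k l))) x y = lam / 3 * l x y - lam / 3 * (1 - x) * pdx l x y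
      - pdx (pdx k) x x * l x y + kernelComp (pdx (pdx (pdx k))) l x y := by
  have hkx := contDiff_pdx (n := 2) hk
  have hkxx := contDiff_pdx (n := 1) hkx
  have e2 : ∀ x' ∈ Ioo (0:ℝ) 1, pdx (pdx (kernelComp k l)) x' y =
      -(lam / 3 * (1 - x') * l x' y) + kernelComp (pdx (pdx k)) l x' y := by
    intro x' hx'
    rw [← hk1 x' (Ioo_subset_Icc_self hx')]
    refine HasDerivAt.deriv ((hasDerivAt_kernelComp_fst (hkx.of_le (by norm_num))
      hl.continuous x' y).congr_of_eventuallyEq ?_)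
    filter_upwards [Ioo_mem_nhds hx'.1 hx'.2] with r hr using
      pdx_kernelComp (hk.of_le (by norm_num)) hl.continuous hk0 hr y
  have hlin : HasDerivAt (fun r : ℝ => lam / 3 * (1 - r)) (-(lam / 3)) x := by
    simpa using ((hasDerivAt_id x).const_sub 1).const_mul (lam / 3)
  have h := ((hlin.mul (hasDerivAt_fst hl x y)).neg.add
    (hasDerivAt_kernelComp_fst hkxx hl.continuous x y))
  refine (HasDerivAt.deriv (h.congr_of_eventuallyEq ?_)).trans (by ring)
  filter_upwards [Ioo_mem_nhds hx.1 hx.2] with r hr using e2 r hr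

lemma pdy_pdy_pdy_kernelComp {lam : ℝ} {k l : ℝ → ℝ → ℝ} (hk : ContDiff ℝ 1 (uncurry k))
    (hl : ContDiff ℝ 3 (uncurry l)) (hl0 : ∀ x ∈ Icc (0:ℝ) 1, l x x = 0)
    (hl1 : ∀ x ∈ Icc (0:ℝ) 1, pdx l x x = lam / 3 * (1 - x)) (x : ℝ) {y : ℝ}
    (hy : y ∈ Ioo (0:ℝ) 1) :
    pdy (pdy (pdy (kernelComp k l))) x y = lam / 3 * k x y - lam / 3 * (1 - y) * pdy k x y
      + k x y * pdy (pdy l) y y + kernelComp k (pdy (pdy (pdy l))) x y := by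
  have hly := contDiff_pdy (n := 2) hl
  have hlyy := contDiff_pdy (n := 1) hly
  have e2 : ∀ y' ∈ Ioo (0:ℝ) 1, pdy (pdy (kernelComp k l)) x y' =
      -(lam / 3 * (1 - y') * k x y') + kernelComp k (pdy (pdy l)) x y' := by
    intro y' hy'
    have hs := pdx_add_pdy_diagonal (hl.of_le (by norm_num)) hl0 hy'
    rw [hl1 y' (Ioo_subset_Icc_self hy')] at hs
    have h := hasDerivAt_kernelComp_snd hk.continuous
      (hly.of_le (by norm_num : (1 : WithTop ℕ∞) ≤ 2)) x y'
    refine (HasDerivAt.deriv (h.congr_of_eventuallyEq ?_)).trans ?_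
    · filter_upwards [Ioo_mem_nhds hy'.1 hy'.2] with r hr using
        pdy_kernelComp hk.continuous (hl.of_le (by norm_num)) hl0 x hr
    · rw [eq_neg_of_add_eq_zero_right hs]
      ring
  have hlin : HasDerivAt (fun r : ℝ => lam / 3 * (1 - r)) (-(lam / 3)) y := by
    simpa using ((hasDerivAt_id y).const_sub 1).const_mul (lam / 3)
  have h := ((hlin.mul (hasDerivAt_snd hk x y)).neg.add
    (hasDerivAt_kernelComp_snd hk.continuous hlyy x y))
  refine (HasDerivAt.deriv (h.congr_of_eventuallyEq ?_)).trans (by ring)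
  filter_upwards [Ioo_mem_nhds hy.1 hy.2] with r hr using e2 r hr

/-- The composition of the two kernels solves the kernel equation with source `lam * (k + l)`. -/
lemma kernelComp_pde {lam : ℝ} {k l : ℝ → ℝ → ℝ} (hk : IsControllerKernel lam k)
    (hl : IsInverseControllerKernel lam l) {x y : ℝ} (h0 : 0 < x) (hxy : x < y) (h1 : y < 1) :
    pdx (pdx (pdx (kernelComp k l))) x y + pdy (pdy (pdy (kernelComp k l))) x y
      + pdx (kernelComp k l) x y + pdy (kernelComp k l) x y = lam * (k x y + l x y) := by
  obtain ⟨hkc, hkp, -, hk0, hk1⟩ := hk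
  obtain ⟨hlc, hlp, -, hl0, hl1⟩ := hl
  have hx : x ∈ Ioo (0:ℝ) 1 := ⟨h0, hxy.trans h1⟩
  have hy : y ∈ Ioo (0:ℝ) 1 := ⟨h0.trans hxy, h1⟩
  have hle : (1 : WithTop ℕ∞) ≤ 3 := by norm_num
  have hk' := hkc.of_le hle
  have hl' := hlc.of_le hle
  have hkx := contDiff_pdx (n := 2) hkc
  have hkxx := contDiff_pdx (n := 1) hkx
  have hkxxx := contDiff_pdx (n := 0) hkxx
  have hky := contDiff_pdy (n := 2) hkc
  have hkyy := contDiff_pdy (n := 1) hky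
  have hlx := contDiff_pdx (n := 2) hlc
  have hlxx := contDiff_pdx (n := 1) hlx
  have hlxxx := contDiff_pdx (n := 0) hlxx
  have hly := contDiff_pdy (n := 2) hlc
  have hlyy := contDiff_pdy (n := 1) hly
  have hlyyy := contDiff_pdy (n := 0) hlyy
  have hkyyy := contDiff_pdy (n := 0) hkyy
  have ck := hkc.continuous
  have cl := hlc.continuous
  have ckx := hkx.continuous
  have cly := hly.continuous
  have ckxxx := hkxxx.continuous
  have clyyy := hlyyy.continuous
  have clxxx := hlxxx.continuous
  have ckyyy := hkyyy.continuous
  have cky := hky.continuous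
  have clx := hlx.continuous
  rw [pdx_pdx_pdx_kernelComp hkc hl' hk0 hk1 hx y, pdy_pdy_pdy_kernelComp hk' hlc hl0 hl1 x hy,
    pdx_kernelComp hk' cl hk0 hx y, pdy_kernelComp ck hl' hl0 x hy]
  have hΦ : ∀ ξ, HasDerivAt (fun ξ => pdy (pdy k) x ξ * l ξ y - pdy k x ξ * pdx l ξ y
      + k x ξ * pdx (pdx l) ξ y + k x ξ * l ξ y)
      (pdy (pdy (pdy k)) x ξ * l ξ y + k x ξ * pdx (pdx (pdx l)) ξ y
        + pdy k x ξ * l ξ y + k x ξ * pdx l ξ y) ξ := by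
    intro ξ
    have d0 := hasDerivAt_snd hk' x ξ
    have d1 := hasDerivAt_snd (hky.of_le (by norm_num)) x ξ
    have d2 := hasDerivAt_snd hkyy x ξ
    have g0 := hasDerivAt_fst hl' ξ y
    have g1 := hasDerivAt_fst (hlx.of_le (by norm_num)) ξ y
    have g2 := hasDerivAt_fst hlxx ξ y
    exact ((((d2.mul g0).sub (d1.mul g1)).add (d0.mul g2)).add (d0.mul g0)).congr_deriv (by ring)
  have hparts := intervalIntegral.integral_eq_sub_of_hasDerivAt (a := x) (b := y)
    (fun ξ _ => hΦ ξ) (Continuous.intervalIntegrable (by fun_prop) _ _)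
  have hsum : kernelComp (pdx (pdx (pdx k))) l x y + kernelComp k (pdy (pdy (pdy l))) x y
      + kernelComp (pdx k) l x y + kernelComp k (pdy l) x y
      = -∫ ξ in x..y, (pdy (pdy (pdy k)) x ξ * l ξ y + k x ξ * pdx (pdx (pdx l)) ξ y
        + pdy k x ξ * l ξ y + k x ξ * pdx l ξ y) := by
    unfold kernelComp
    rw [← intervalIntegral.integral_neg, ← intervalIntegral.integral_add,
      ← intervalIntegral.integral_add, ← intervalIntegral.integral_add]
    · refine intervalIntegral.integral_congr fun ξ hξ => ?_
      rw [uIcc_of_le hxy.le] at hξ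
      have e1 := hkp x ξ ⟨h0.le, hξ.1, hξ.2.trans h1.le⟩
      have e2 := hlp ξ y ⟨h0.le.trans hξ.1, hξ.2, h1.le⟩
      linear_combination l ξ y * e1 + k x ξ * e2
    all_goals exact Continuous.intervalIntegrable (by fun_prop) _ _
  rw [hparts, hk0 x (Ioo_subset_Icc_self hx), hl0 y (Ioo_subset_Icc_self hy),
    hl1 y (Ioo_subset_Icc_self hy)] at hsum
  have s1 := pdx_add_pdy_diagonal hk' hk0 hx
  rw [hk1 x (Ioo_subset_Icc_self hx)] at s1
  obtain ⟨s2, s3⟩ := diagonal_second_derivatives hkc hk0 hk1 hx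
  obtain ⟨s4, s5⟩ := diagonal_second_derivatives hlc hl0 hl1 hy
  linear_combination hsum - pdx l x y * s1 + l x y * (s3 - s2) + k x y * (s5 - s4)

/-- A `C³` solution of `mₓₓₓ + mᵧᵧᵧ + mₓ + mᵧ = 0` on the open triangle with zero Cauchy data on
the diagonal is constant along the parallels to the diagonal. -/
lemma eq_shift_of_cauchy_data_diagonal {m : ℝ → ℝ → ℝ} (hm : ContDiff ℝ 3 (uncurry m))
    (hpde : ∀ x y, 0 < x → x < y → y < 1 →
      pdx (pdx (pdx m)) x y + pdy (pdy (pdy m)) x y + pdx m x y + pdy m x y = 0)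
    (hdiag : ∀ x ∈ Ioo (0:ℝ) 1, m x x = 0 ∧ pdx m x x = 0 ∧ pdy m x x = 0)
    {x y d : ℝ} (h0 : 0 < x) (hxy : x < y) (hd : 0 ≤ d) (hyd : y + d < 1) :
    m (x + d) (y + d) = m x y := by
  have hle : (1 : WithTop ℕ∞) ≤ 3 := by norm_num
  have hle2 : (1 : WithTop ℕ∞) ≤ 2 := by norm_num
  have hx := contDiff_pdx (n := 2) hm
  have hy := contDiff_pdy (n := 2) hm
  have hxx := contDiff_pdx (n := 1) hx
  have hxy' := contDiff_pdx (n := 1) hy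
  have hyy := contDiff_pdy (n := 1) hy
  have c1 : pdy (pdx m) = pdx (pdy m) := (pdx_pdy_comm (hm.of_le (by norm_num))).symm
  have c2 : pdy (pdx (pdx m)) = pdx (pdx (pdy m)) := by rw [← pdx_pdy_comm hx, c1]
  have c3 : pdy (pdx (pdy m)) = pdx (pdy (pdy m)) := (pdx_pdy_comm hy).symm
  have hconst : ∀ a b, 0 < a → a < b → b + d < 1 →
      pdx (pdx m) (a + d) (b + d) - pdx (pdy m) (a + d) (b + d) + pdy (pdy m) (a + d) (b + d)
        + m (a + d) (b + d) = pdx (pdx m) a b - pdx (pdy m) a b + pdy (pdy m) a b + m a b := by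
    intro a b ha hab hb
    have la : ∀ r, HasDerivAt (fun r : ℝ => a + r) 1 r := fun r => (hasDerivAt_id r).const_add a
    have lb : ∀ r, HasDerivAt (fun r : ℝ => b + r) 1 r := fun r => (hasDerivAt_id r).const_add b
    have hD : ∀ r ∈ Icc 0 d, HasDerivAt (fun r => pdx (pdx m) (a + r) (b + r)
        - pdx (pdy m) (a + r) (b + r) + pdy (pdy m) (a + r) (b + r) + m (a + r) (b + r)) 0 r := by
      intro r hr
      have e := hpde (a + r) (b + r) (by linarith [hr.1]) (by linarith) (by linarith [hr.2])
      refine ((((hasDerivAt_comp_curve hxx (la r) (lb r)).sub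
        (hasDerivAt_comp_curve hxy' (la r) (lb r))).add
        (hasDerivAt_comp_curve hyy (la r) (lb r))).add
        (hasDerivAt_comp_curve (hm.of_le hle) (la r) (lb r))).congr_deriv ?_
      rw [c2, c3]
      linear_combination e
    have := constant_of_has_deriv_right_zero
      (fun r hr => (hD r hr).continuousAt.continuousWithinAt)
      (fun r hr => (hD r (Ico_subset_Icc_self hr)).hasDerivWithinAt) d ⟨hd, le_rfl⟩
    simpa using this
  have hshift : ∀ {n : WithTop ℕ∞} {f : ℝ → ℝ → ℝ}, ContDiff ℝ n (uncurry f) →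
      ContDiff ℝ n (uncurry fun x y => f (x + d) (y + d)) := fun hf =>
    hf.comp ((contDiff_fst.add contDiff_const).prodMk (contDiff_snd.add contDiff_const))
  have ex : pdx (fun x y => m (x + d) (y + d) - m x y)
      = fun x y => pdx m (x + d) (y + d) - pdx m x y := by
    rw [pdx_sub (hshift (hm.of_le hle)) (hm.of_le hle), pdx_shift]
  have ey : pdy (fun x y => m (x + d) (y + d) - m x y)
      = fun x y => pdy m (x + d) (y + d) - pdy m x y := by
    rw [pdy_sub (hshift (hm.of_le hle)) (hm.of_le hle), pdy_shift]
  refine sub_eq_zero.1 (eq_zero_of_cauchy_data_diagonal (v := fun x y => m (x + d) (y + d) - m x y)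
    ((hshift hm).sub hm) (c := 1 - d) ?_ ?_ h0 hxy (by linarith))
  · intro a b ha hab hb
    rw [ex, ey, pdx_sub (hshift (hx.of_le hle2)) (hx.of_le hle2), pdx_shift,
      pdx_sub (hshift (hy.of_le hle2)) (hy.of_le hle2), pdx_shift,
      pdy_sub (hshift (hy.of_le hle2)) (hy.of_le hle2), pdy_shift]
    linear_combination hconst a b ha hab (by linarith)
  · intro a ha hac
    obtain ⟨p1, p2, p3⟩ := hdiag a ⟨ha, by linarith⟩
    obtain ⟨q1, q2, q3⟩ := hdiag (a + d) ⟨by linarith, by linarith⟩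
    rw [ex, ey]
    simp [p1, p2, p3, q1, q2, q3]

/-- A `C³` solution of `mₓₓₓ + mᵧᵧᵧ + mₓ + mᵧ = 0` on the open triangle with zero Cauchy data on
the diagonal and vanishing on the side `y = 1` is zero on the closed triangle. -/
lemma eq_zero_on_triangle_s6 {m : ℝ → ℝ → ℝ} (hm : ContDiff ℝ 3 (uncurry m))
    (hpde : ∀ x y, 0 < x → x < y → y < 1 →
      pdx (pdx (pdx m)) x y + pdy (pdy (pdy m)) x y + pdx m x y + pdy m x y = 0)
    (hdiag : ∀ x ∈ Ioo (0:ℝ) 1, m x x = 0 ∧ pdx m x x = 0 ∧ pdy m x x = 0)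
    (htop : ∀ x ∈ Icc (0:ℝ) 1, m x 1 = 0) {x y : ℝ} (hT : (x, y) ∈ T) : m x y = 0 := by
  have hc := hm.continuous
  have hopen : ∀ a b, 0 < a → a < b → b < 1 → m a b = 0 := by
    intro a b ha hab hb
    have hlim : Tendsto (fun r => m (a + r) (b + r)) (𝓝[<] (1 - b))
        (𝓝 (m (a + (1 - b)) (b + (1 - b)))) :=
      ((by fun_prop : Continuous fun r => m (a + r) (b + r)).tendsto _).mono_left
        nhdsWithin_le_nhds
    have hev : ∀ᶠ r in 𝓝[<] (1 - b), m a b = m (a + r) (b + r) := by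
      filter_upwards [Ioo_mem_nhdsLT (sub_pos.2 hb)] with r hr
      exact (eq_shift_of_cauchy_data_diagonal hm hpde hdiag ha hab hr.1.le
        (by linarith [hr.2])).symm
    rw [tendsto_nhds_unique (tendsto_const_nhds.congr' hev) hlim, add_sub_cancel]
    exact htop _ ⟨by linarith, by linarith⟩
  obtain ⟨h0, hxy, h1⟩ := hT
  simp only at h0 hxy h1
  have hlim : Tendsto (fun r => m ((1 - r) * x + r / 3) ((1 - r) * y + 2 * r / 3)) (𝓝[>] 0)
      (𝓝 (m ((1 - 0) * x + 0 / 3) ((1 - 0) * y + 2 * 0 / 3))) :=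
    ((by fun_prop : Continuous fun r =>
      m ((1 - r) * x + r / 3) ((1 - r) * y + 2 * r / 3)).tendsto _).mono_left nhdsWithin_le_nhds
  have hev : ∀ᶠ r : ℝ in 𝓝[>] 0, 0 = m ((1 - r) * x + r / 3) ((1 - r) * y + 2 * r / 3) := by
    filter_upwards [Ioo_mem_nhdsGT one_pos] with r hr
    have h2 : 0 ≤ (1 - r) * x := mul_nonneg (by linarith [hr.2]) h0
    have h3 : (1 - r) * x ≤ (1 - r) * y := mul_le_mul_of_nonneg_left hxy (by linarith [hr.2])
    have h4 : (1 - r) * y ≤ 1 - r := mul_le_of_le_one_right (by linarith [hr.2]) h1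
    exact (hopen _ _ (by linarith [hr.1]) (by linarith [hr.1]) (by linarith [hr.1])).symm
  simpa using (tendsto_nhds_unique (tendsto_const_nhds.congr' hev) hlim).symm

/-- Reciprocity relation between the controller kernel and its inverse:
`l(x,y) - k(x,y) = ∫_x^y k(x,ξ) l(ξ,y) dξ` on `T`. -/
theorem controller_kernel_reciprocity (lam : ℝ) (hlam : 0 < lam)
    (k l : ℝ → ℝ → ℝ) (hk : IsControllerKernel lam k)
    (hl : IsInverseControllerKernel lam l) :
    ∀ x y : ℝ, (x, y) ∈ T →
      l x y - k x y = ∫ ξ in x..y, k x ξ * l ξ y := by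
  intro x y hT
  have hI : ContDiff ℝ 3 (uncurry (kernelComp k l)) := contDiff_kernelComp 3 hk.1 hl.1
  have hpI := @kernelComp_pde lam k l hk hl
  obtain ⟨hkc, hkp, hkt, hk0, hk1⟩ := hk
  obtain ⟨hlc, hlp, hlt, hl0, hl1⟩ := hl
  have hle : (1 : WithTop ℕ∞) ≤ 3 := by norm_num
  have hle2 : (1 : WithTop ℕ∞) ≤ 2 := by norm_num
  have hk' := hkc.of_le hle
  have hl' := hlc.of_le hle
  have ex := pdx_sub_sub hl' hk' (hI.of_le hle)
  have ey := pdy_sub_sub hl' hk' (hI.of_le hle)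
  refine sub_eq_zero.1 (eq_zero_on_triangle_s6
    (m := fun x y => l x y - k x y - kernelComp k l x y) ((hlc.sub hkc).sub hI) ?_ ?_ ?_ hT)
  · intro a b ha hab hb
    have lx := contDiff_pdx (n := 2) hlc
    have kx := contDiff_pdx (n := 2) hkc
    have Ix := contDiff_pdx (n := 2) hI
    have ly := contDiff_pdy (n := 2) hlc
    have ky := contDiff_pdy (n := 2) hkc
    have Iy := contDiff_pdy (n := 2) hI
    rw [ex, ey, pdx_sub_sub (lx.of_le hle2) (kx.of_le hle2) (Ix.of_le hle2),
      pdy_sub_sub (ly.of_le hle2) (ky.of_le hle2) (Iy.of_le hle2),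
      pdx_sub_sub (contDiff_pdx (n := 1) lx) (contDiff_pdx (n := 1) kx) (contDiff_pdx (n := 1) Ix),
      pdy_sub_sub (contDiff_pdy (n := 1) ly) (contDiff_pdy (n := 1) ky) (contDiff_pdy (n := 1) Iy)]
    linear_combination hlp a b ⟨ha.le, hab.le, hb.le⟩ - hkp a b ⟨ha.le, hab.le, hb.le⟩
      - hpI ha hab hb
  · intro z hz
    have hz' := Ioo_subset_Icc_self hz
    have sl := pdx_add_pdy_diagonal hl' hl0 hz
    have sk := pdx_add_pdy_diagonal hk' hk0 hz
    rw [hl1 z hz'] at sl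
    rw [hk1 z hz'] at sk
    rw [ex, ey]
    beta_reduce
    rw [pdx_kernelComp hk' hlc.continuous hk0 hz z, pdy_kernelComp hkc.continuous hl' hl0 z hz,
      hl0 z hz', hk0 z hz', hl1 z hz', hk1 z hz']
    simp only [kernelComp, intervalIntegral.integral_same]
    exact ⟨by ring, by ring, by linarith⟩
  · intro z hz
    have hzero : kernelComp k l z 1 = ∫ _ in z..1, (0 : ℝ) := by
      refine intervalIntegral.integral_congr fun ξ hξ => ?_
      rw [uIcc_of_le hz.2] at hξ
      simp [hlt ξ ⟨hz.1.trans hξ.1, hξ.2⟩]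
    simp [hzero, hlt z hz, hkt z hz]
end
end

section
/- Let k : T → ℝ be a continuous function. Then there exists a unique continuous function l : T → ℝ such that l(x,y) − k(x,y) = ∫_x^y k(x,ξ) l(ξ,y) dξ for all (x,y) ∈ T; moreover, for this l and for every continuous function u : [0,1] → ℝ, if ω : [0,1] → ℝ is defined by ω(x) = u(x) − ∫_x^1 k(x,y) u(y) dy, then u(x) = ω(x) + ∫_x^1 l(x,y) ω(y) dy for all x ∈ [0,1]. In other words, the Volterra integral transformation with upper-triangular kernel k is invertible, with inverse given by a Volterra transformation of the same form. -/
open MeasureTheory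

noncomputable section

open Set Function

theorem isCompact_T : IsCompact T := by
  refine (isCompact_Icc (a := ((0 : ℝ), (0 : ℝ))) (b := (1, 1))).of_isClosed_subset ?_ ?_
  · exact (isClosed_le continuous_const continuous_fst).inter
      ((isClosed_le continuous_fst continuous_snd).inter
        (isClosed_le continuous_snd continuous_const))
  · rintro ⟨x, y⟩ ⟨h0, h1, h2⟩
    exact ⟨⟨h0, h0.trans h1⟩, ⟨h1.trans h2, h2⟩⟩

/-- A continuous retraction of the plane onto the triangle `T`. -/
def retractT (p : ℝ × ℝ) : ℝ × ℝ :=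
  (max 0 (min p.1 (max 0 (min p.2 1))), max 0 (min p.2 1))

theorem continuous_retractT : Continuous retractT := by
  unfold retractT
  fun_prop

theorem retractT_mem (p : ℝ × ℝ) : retractT p ∈ T :=
  ⟨le_max_left _ _, max_le (le_max_left _ _) (min_le_right _ _),
    max_le zero_le_one (min_le_right _ _)⟩

theorem retractT_eq_self {p : ℝ × ℝ} (hp : p ∈ T) : retractT p = p := by
  obtain ⟨h0, h1, h2⟩ := hp
  simp [retractT, h0, h1, h2, h0.trans h1]

/-- A function continuous on `T` agrees on `T` with a function continuous on the plane. -/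
theorem exists_continuous_eqOn_T {k : ℝ → ℝ → ℝ} (hk : ContinuousOn (uncurry k) T) :
    ∃ K : ℝ → ℝ → ℝ, Continuous (uncurry K) ∧ ∀ x y, (x, y) ∈ T → K x y = k x y :=
  ⟨fun x y => uncurry k (retractT (x, y)),
    hk.comp_continuous continuous_retractT retractT_mem,
    fun x y h => by simp only [retractT_eq_self h, uncurry_apply_pair]⟩

/-- The integral of a function dominated by a decaying exponential. -/
theorem abs_integral_le_of_le_exp {f : ℝ → ℝ} {x y r C : ℝ} (hr : 0 < r) (hC : 0 ≤ C)
    (hxy : x ≤ y) (hf : ∀ ξ ∈ Icc x y, |f ξ| ≤ C * Real.exp (-r * (ξ - x))) :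
    |∫ ξ in x..y, f ξ| ≤ C / r := by
  have hd : ∀ ξ ∈ uIcc x y, HasDerivAt (fun t => -(C / r) * Real.exp (-r * (t - x)))
      (C * Real.exp (-r * (ξ - x))) ξ := by
    intro ξ _
    have h : HasDerivAt (fun t => -(C / r) * Real.exp (-r * (t - x)))
        (-(C / r) * (Real.exp (-r * (ξ - x)) * (-r * 1))) ξ :=
      ((((hasDerivAt_id ξ).sub_const x).const_mul (-r)).exp).const_mul (-(C / r))
    exact h.congr_deriv (by field_simp)
  have hc : Continuous fun ξ => C * Real.exp (-r * (ξ - x)) := by fun_prop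
  have hi := intervalIntegral.integral_eq_sub_of_hasDerivAt hd (hc.intervalIntegrable x y)
  calc |∫ ξ in x..y, f ξ| ≤ ∫ ξ in x..y, C * Real.exp (-r * (ξ - x)) :=
        intervalIntegral.norm_integral_le_of_norm_le (f := f) hxy
          (.of_forall fun ξ hξ => hf ξ (Ioc_subset_Icc_self hξ)) (hc.intervalIntegrable x y)
    _ = C / r - C / r * Real.exp (-r * (y - x)) := by
        rw [hi]
        simp
        ring
    _ ≤ C / r := sub_le_self _ (by positivity)

/-- The homogeneous Volterra equation with bounded kernel has only the zero solution. -/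
theorem eq_zero_of_eq_integral {κ : ℝ → ℝ → ℝ} {d : ℝ → ℝ} {a b M : ℝ}
    (hd : ContinuousOn d (Icc a b))
    (hκ : ∀ x ∈ Icc a b, ∀ ξ ∈ Icc x b, |κ x ξ| ≤ M)
    (h : ∀ x ∈ Icc a b, d x = ∫ ξ in x..b, κ x ξ * d ξ) :
    ∀ x ∈ Icc a b, d x = 0 := by
  intro x hx
  have hM : 0 ≤ M := (abs_nonneg _).trans (hκ x hx x ⟨le_rfl, hx.2⟩)
  have hr : 0 < 2 * M + 1 := by positivity
  set r := 2 * M + 1 with hrdef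
  obtain ⟨z, hz, hmax⟩ := isCompact_Icc.exists_isMaxOn ⟨x, hx⟩
    (f := fun t => |d t| * Real.exp (r * t))
    (hd.abs.mul (by fun_prop : Continuous fun t => Real.exp (r * t)).continuousOn)
  have hle : |d z| ≤ M * |d z| / r := by
    conv_lhs => rw [h z hz]
    refine abs_integral_le_of_le_exp hr (by positivity) hz.2 fun ξ hξ => ?_
    have h1 : |d ξ| * Real.exp (r * ξ) ≤ |d z| * Real.exp (r * z) := hmax ⟨hz.1.trans hξ.1, hξ.2⟩
    have h2 : |d ξ| ≤ |d z| * Real.exp (-r * (ξ - z)) := by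
      have e : Real.exp (-r * (ξ - z)) = Real.exp (r * z) / Real.exp (r * ξ) := by
        rw [← Real.exp_sub]
        ring_nf
      rwa [e, ← mul_div_assoc, le_div_iff₀ (Real.exp_pos _)]
    rw [abs_mul, mul_assoc]
    exact mul_le_mul (hκ z hz ξ hξ) h2 (abs_nonneg _) hM
  rw [le_div_iff₀ hr] at hle
  have hz0 : |d z| = 0 := by nlinarith [abs_nonneg (d z)]
  have hxz : |d x| * Real.exp (r * x) ≤ |d z| * Real.exp (r * z) := hmax hx
  rw [hz0, zero_mul] at hxz
  exact abs_nonpos_iff.mp (nonpos_of_mul_nonpos_left hxz (Real.exp_pos _))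

theorem continuous_integral_of_continuous {X : Type*} [TopologicalSpace X] {f : X → ℝ → ℝ}
    (hf : Continuous (uncurry f)) {a b : X → ℝ} (ha : Continuous a) (hb : Continuous b) :
    Continuous fun q => ∫ ξ in a q..b q, f q ξ := by
  have hi : ∀ q s t, IntervalIntegrable (f q) volume s t := fun q s t =>
    (hf.comp (Continuous.prodMk_right q)).intervalIntegrable s t
  have e : (fun q => ∫ ξ in a q..b q, f q ξ) =
      fun q => (∫ ξ in 0..b q, f q ξ) - ∫ ξ in 0..a q, f q ξ := by
    funext q
    rw [intervalIntegral.integral_interval_sub_left (hi _ _ _) (hi _ _ _)]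
  rw [e]
  exact (intervalIntegral.continuous_parametric_intervalIntegral_of_continuous hf hb).sub
    (intervalIntegral.continuous_parametric_intervalIntegral_of_continuous hf ha)

/-- Fubini's theorem on a triangle. -/
theorem integral_integral_triangle {F : ℝ → ℝ → ℝ} (hF : Continuous (uncurry F)) {a b : ℝ}
    (hab : a ≤ b) :
    ∫ ξ in a..b, ∫ y in ξ..b, F ξ y = ∫ y in a..b, ∫ ξ in a..y, F ξ y := by
  let S : Set (ℝ × ℝ) := {p | p.1 < p.2}
  have hS : MeasurableSet S := measurableSet_lt measurable_fst measurable_snd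
  let H : ℝ → ℝ → ℝ := fun ξ y => S.indicator (uncurry F) (ξ, y)
  have hH : IntegrableOn (uncurry H) (uIoc a b ×ˢ uIoc a b) := by
    have h : IntegrableOn (uncurry F) (uIoc a b ×ˢ uIoc a b) :=
      (hF.continuousOn.integrableOn_compact (isCompact_uIcc.prod isCompact_uIcc)).mono_set
        (prod_mono uIoc_subset_uIcc uIoc_subset_uIcc)
    exact Integrable.indicator h hS
  have h1 : ∀ ξ ∈ uIcc a b, ∫ y in a..b, H ξ y = ∫ y in ξ..b, F ξ y := by
    intro ξ hξ
    rw [uIcc_of_le hab] at hξ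
    have e : H ξ = (Ioi ξ).indicator (F ξ) := by
      funext y
      simp [H, S, indicator]
    rw [intervalIntegral.integral_of_le hab, intervalIntegral.integral_of_le hξ.2, e,
      setIntegral_indicator measurableSet_Ioi, Ioc_inter_Ioi, max_eq_right hξ.1]
  have h2 : ∀ y ∈ uIcc a b, ∫ ξ in a..b, H ξ y = ∫ ξ in a..y, F ξ y := by
    intro y hy
    rw [uIcc_of_le hab] at hy
    have e : (fun ξ => H ξ y) = (Iio y).indicator (fun ξ => F ξ y) := by
      funext ξ
      simp [H, S, indicator]
    have e' : Ioc a b ∩ Iio y = Ioo a y := by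
      ext t
      simp only [mem_inter_iff, mem_Ioc, mem_Iio, mem_Ioo]
      exact ⟨fun h => ⟨h.1.1, h.2⟩, fun h => ⟨⟨h.1, h.2.le.trans hy.2⟩, h.2⟩⟩
    rw [intervalIntegral.integral_of_le hab, intervalIntegral.integral_of_le hy.1, e,
      setIntegral_indicator measurableSet_Iio, e', integral_Ioc_eq_integral_Ioo]
  rw [← intervalIntegral.integral_congr h1, ← intervalIntegral.integral_congr h2]
  exact intervalIntegral_intervalIntegral_swap hH

/-- Existence of the resolvent kernel on `T`, by contraction in an exponentially weighted norm. -/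
theorem exists_resolvent {K : ℝ → ℝ → ℝ} (hK : Continuous (uncurry K)) {M : ℝ} (hM : 0 ≤ M)
    (hKM : ∀ x y, (x, y) ∈ T → |K x y| ≤ M) :
    ∃ L : ℝ → ℝ → ℝ, Continuous (uncurry L) ∧
      ∀ x y, (x, y) ∈ T → L x y = K x y + ∫ ξ in x..y, K x ξ * L ξ y := by
  have hr : 0 < 2 * M + 1 := by positivity
  set r := 2 * M + 1 with hrdef
  have : CompactSpace T := isCompact_iff_compactSpace.mp isCompact_T
  let ρ : ℝ × ℝ → T := fun p => ⟨retractT p, retractT_mem p⟩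
  have hρ : Continuous ρ := continuous_retractT.subtype_mk _
  let κ : ℝ → ℝ → ℝ := fun x ξ => Real.exp (-r * (ξ - x)) * K x ξ
  have hκ : Continuous (uncurry κ) := by
    have : Continuous fun p : ℝ × ℝ => Real.exp (-r * (p.2 - p.1)) := by fun_prop
    exact this.mul hK
  have hint : ∀ G : C(T, ℝ), Continuous
      (uncurry fun (q : T) (ξ : ℝ) => κ q.1.1 ξ * G (ρ (ξ, q.1.2))) := by
    intro G
    have h1 : Continuous fun p : T × ℝ => uncurry κ (p.1.1.1, p.2) := hκ.comp (by fun_prop)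
    have h2 : Continuous fun p : T × ℝ => G (ρ (p.2, p.1.1.2)) :=
      G.continuous.comp (hρ.comp (by fun_prop))
    exact h1.mul h2
  let Φ : C(T, ℝ) → C(T, ℝ) := fun G =>
    ⟨fun q => κ q.1.1 q.1.2 + ∫ ξ in q.1.1..q.1.2, κ q.1.1 ξ * G (ρ (ξ, q.1.2)),
      (hκ.comp continuous_subtype_val).add
        (continuous_integral_of_continuous (hint G) (by fun_prop) (by fun_prop))⟩
  have hΦ : ContractingWith (1 / 2) Φ := by
    refine ⟨by norm_num, LipschitzWith.of_dist_le_mul fun G₁ G₂ => ?_⟩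
    rw [ContinuousMap.dist_le (by positivity)]
    intro q
    obtain ⟨⟨x, y⟩, hq⟩ := q
    have hi : ∀ G : C(T, ℝ), IntervalIntegrable
        (fun ξ => κ x ξ * G (ρ (ξ, y))) volume x y := fun G =>
      ((hint G).comp (Continuous.prodMk_right (⟨(x, y), hq⟩ : T))).intervalIntegrable x y
    have hb : |∫ ξ in x..y, κ x ξ * (G₁ (ρ (ξ, y)) - G₂ (ρ (ξ, y)))| ≤ M * dist G₁ G₂ / r := by
      refine abs_integral_le_of_le_exp hr (by positivity) hq.2.1 fun ξ hξ => ?_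
      have h1 : |K x ξ| ≤ M := hKM x ξ ⟨hq.1, hξ.1, hξ.2.trans hq.2.2⟩
      have h2 : |G₁ (ρ (ξ, y)) - G₂ (ρ (ξ, y))| ≤ dist G₁ G₂ :=
        ContinuousMap.dist_apply_le_dist (f := G₁) (g := G₂) (ρ (ξ, y))
      rw [abs_mul, abs_mul, Real.abs_exp, mul_assoc, mul_comm (Real.exp _)]
      gcongr
    have hd : dist (Φ G₁ ⟨(x, y), hq⟩) (Φ G₂ ⟨(x, y), hq⟩) =
        |∫ ξ in x..y, κ x ξ * (G₁ (ρ (ξ, y)) - G₂ (ρ (ξ, y)))| := by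
      simp only [mul_sub]
      rw [intervalIntegral.integral_sub (hi G₁) (hi G₂), Real.dist_eq]
      exact congrArg abs (add_sub_add_left_eq_sub _ _ _)
    rw [hd]
    refine hb.trans ?_
    rw [div_le_iff₀ hr]
    push_cast
    nlinarith [dist_nonneg (x := G₁) (y := G₂)]
  obtain ⟨G, hG⟩ : ∃ G, Φ G = G := ⟨_, hΦ.fixedPoint_isFixedPt⟩
  refine ⟨fun x y => Real.exp (r * (y - x)) * G (ρ (x, y)), ?_, fun x y hxy => ?_⟩
  · have : Continuous fun p : ℝ × ℝ => Real.exp (r * (p.2 - p.1)) := by fun_prop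
    exact this.mul (G.continuous.comp hρ)
  · have hρxy : ρ (x, y) = ⟨(x, y), hxy⟩ := Subtype.ext (retractT_eq_self hxy)
    have hfix : G (ρ (x, y)) = κ x y + ∫ ξ in x..y, κ x ξ * G (ρ (ξ, y)) := by
      conv_lhs => rw [hρxy, ← hG]
      rfl
    dsimp only
    rw [hfix, mul_add, ← intervalIntegral.integral_const_mul]
    congr 1
    · simp only [κ]
      rw [← mul_assoc, ← Real.exp_add]
      simp
    · congr 1
      funext ξ
      have e : Real.exp (r * (y - x)) * Real.exp (-r * (ξ - x)) = Real.exp (r * (y - ξ)) := by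
        rw [← Real.exp_add]
        ring_nf
      simp only [κ, ← e]
      ring

/-- Invertibility of the Volterra transformation with upper-triangular kernel `k`:
there is a unique continuous kernel `l` on `T` satisfying the reciprocity relation,
and it provides the inverse Volterra transformation. -/
theorem volterra_transformation_invertible (k : ℝ → ℝ → ℝ)
    (hk : ContinuousOn (Function.uncurry k) T) :
    ∃ l : ℝ → ℝ → ℝ, ContinuousOn (Function.uncurry l) T ∧
      (∀ x y : ℝ, (x, y) ∈ T → l x y - k x y = ∫ ξ in x..y, k x ξ * l ξ y) ∧
      (∀ l' : ℝ → ℝ → ℝ, ContinuousOn (Function.uncurry l') T →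
        (∀ x y : ℝ, (x, y) ∈ T → l' x y - k x y = ∫ ξ in x..y, k x ξ * l' ξ y) →
        ∀ x y : ℝ, (x, y) ∈ T → l' x y = l x y) ∧
      (∀ u : ℝ → ℝ, ContinuousOn u (Set.Icc 0 1) →
        ∀ ω : ℝ → ℝ, (∀ x ∈ Set.Icc (0:ℝ) 1, ω x = u x - ∫ y in x..1, k x y * u y) →
          ∀ x ∈ Set.Icc (0:ℝ) 1, u x = ω x + ∫ y in x..1, l x y * ω y) := by
  obtain ⟨K, hK, hKk⟩ := exists_continuous_eqOn_T hk
  obtain ⟨M, hM⟩ := isCompact_T.exists_bound_of_continuousOn hK.continuousOn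
  have hM0 : 0 ≤ M := (norm_nonneg _).trans (hM _ (retractT_mem 0))
  have hKM : ∀ x y, (x, y) ∈ T → |K x y| ≤ M := fun x y h => hM (x, y) h
  obtain ⟨L, hL, hLeq⟩ := exists_resolvent hK hM0 hKM
  have congr_k : ∀ (f : ℝ → ℝ) (x y : ℝ), (x, y) ∈ T →
      ∫ ξ in x..y, k x ξ * f ξ = ∫ ξ in x..y, K x ξ * f ξ := by
    intro f x y h
    refine intervalIntegral.integral_congr fun ξ hξ => ?_
    rw [uIcc_of_le h.2.1] at hξ
    simp only [hKk x ξ ⟨h.1, hξ.1, hξ.2.trans h.2.2⟩]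
  have hKf : ∀ {f : ℝ → ℝ}, Continuous f → ∀ x a b : ℝ,
      IntervalIntegrable (fun ξ => K x ξ * f ξ) volume a b := fun hf x a b =>
    ((hK.comp (Continuous.prodMk_right x)).mul hf).intervalIntegrable a b
  refine ⟨L, hL.continuousOn, fun x y h => ?_, fun l' hl' heq x y h => ?_,
    fun u hu ω hω => ?_⟩
  · rw [congr_k (fun ξ => L ξ y) x y h, hLeq x y h, hKk x y h, add_sub_cancel_left]
  · have hsub : ∀ t ∈ Icc 0 y, (t, y) ∈ T := fun t ht => ⟨ht.1, ht.2, h.2.2⟩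
    have hl'y : ContinuousOn (fun t => l' t y) (Icc 0 y) :=
      hl'.comp (f := fun t => (t, y)) (by fun_prop) hsub
    have hLy : Continuous fun t => L t y := hL.comp (Continuous.prodMk_left y)
    refine sub_eq_zero.mp (eq_zero_of_eq_integral (κ := K) (d := fun t => l' t y - L t y)
      (M := M) (hl'y.sub hLy.continuousOn)
      (fun t ht ξ hξ => hKM t ξ ⟨ht.1, hξ.1, hξ.2.trans h.2.2⟩) (fun t ht => ?_) x ⟨h.1, h.2.1⟩)
    have hKt : Continuous fun ξ => K t ξ := hK.comp (Continuous.prodMk_right t)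
    have hil' : IntervalIntegrable (fun ξ => K t ξ * l' ξ y) volume t y := by
      refine ContinuousOn.intervalIntegrable (hKt.continuousOn.mul (hl'y.mono ?_))
      rw [uIcc_of_le ht.2]
      exact Icc_subset_Icc_left ht.1
    simp only [mul_sub]
    rw [intervalIntegral.integral_sub hil' (hKf hLy t t y)]
    have e := heq t y (hsub t ht)
    rw [congr_k (fun ξ => l' ξ y) t y (hsub t ht), ← hKk t y (hsub t ht)] at e
    linarith [hLeq t y (hsub t ht)]
  · have h1T : ∀ x ∈ Icc (0 : ℝ) 1, (x, (1 : ℝ)) ∈ T := fun x hx => ⟨hx.1, hx.2, le_rfl⟩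
    let U : ℝ → ℝ := IccExtend zero_le_one (domRestrict (Icc (0 : ℝ) 1) u)
    have hU : Continuous U := (continuousOn_iff_continuous_domRestrict.mp hu).Icc_extend'
    have hUu : ∀ x ∈ Icc (0 : ℝ) 1, U x = u x := fun x hx => IccExtend_of_mem _ _ hx
    have hprod : ∀ {A : ℝ → ℝ → ℝ} {f : ℝ → ℝ}, Continuous (uncurry A) → Continuous f →
        Continuous (uncurry fun x y => A x y * f y) :=
      fun hA hf => hA.mul (hf.comp continuous_snd)
    have hop : ∀ {A : ℝ → ℝ → ℝ} {f : ℝ → ℝ}, Continuous (uncurry A) → Continuous f →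
        Continuous fun x => ∫ y in x..1, A x y * f y := fun hA hf =>
      continuous_integral_of_continuous (hprod hA hf) continuous_id continuous_const
    let W : ℝ → ℝ := fun x => U x - ∫ y in x..1, K x y * U y
    have hW : Continuous W := hU.sub (hop hK hU)
    have hWω : ∀ x ∈ Icc (0 : ℝ) 1, W x = ω x := by
      intro x hx
      rw [hω x hx, congr_k u x 1 (h1T x hx), ← hUu x hx]
      refine congrArg (U x - ·) (intervalIntegral.integral_congr fun y hy => ?_)
      rw [uIcc_of_le hx.2] at hy
      simp only [hUu y ⟨hx.1.trans hy.1, hy.2⟩]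
    let V : ℝ → ℝ := fun x => W x + ∫ y in x..1, L x y * W y
    have hV : Continuous V := hW.add (hop hL hW)
    have hVW : ∀ x ∈ Icc (0 : ℝ) 1, V x = W x + ∫ y in x..1, K x y * V y := by
      intro x hx
      have hKx : Continuous fun ξ => K x ξ := hK.comp (Continuous.prodMk_right x)
      have hF : Continuous (uncurry fun ξ y => K x ξ * (L ξ y * W y)) :=
        (hKx.comp continuous_fst).mul (hprod hL hW)
      have hKL : Continuous fun y => ∫ ξ in x..y, K x ξ * (L ξ y * W y) :=
        continuous_integral_of_continuous (f := fun y ξ => K x ξ * (L ξ y * W y))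
          (hF.comp continuous_swap) continuous_const continuous_id
      have e1 : ∫ y in x..1, L x y * W y =
          ∫ y in x..1, (K x y * W y + ∫ ξ in x..y, K x ξ * (L ξ y * W y)) := by
        refine intervalIntegral.integral_congr fun y hy => ?_
        rw [uIcc_of_le hx.2] at hy
        simp only [hLeq x y ⟨hx.1, hy.1, hy.2⟩, ← mul_assoc,
          intervalIntegral.integral_mul_const, add_mul]
      have e2 : ∫ y in x..1, K x y * V y =
          (∫ y in x..1, K x y * W y) + ∫ ξ in x..1, ∫ y in ξ..1, K x ξ * (L ξ y * W y) := by
        simp only [V, mul_add, intervalIntegral.integral_const_mul]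
        exact intervalIntegral.integral_add (hKf hW x x 1)
          (hKf (hop hL hW) x x 1)
      rw [e2, integral_integral_triangle hF hx.2,
        ← intervalIntegral.integral_add (hKf hW x x 1)
          (hKL.intervalIntegrable _ _), ← e1]
    have hUV : ∀ x ∈ Icc (0 : ℝ) 1, U x - V x = 0 := by
      refine eq_zero_of_eq_integral (κ := K) (M := M) (hU.sub hV).continuousOn
        (fun x hx ξ hξ => hKM x ξ ⟨hx.1, hξ.1, hξ.2⟩) fun x hx => ?_
      simp only [mul_sub]
      rw [intervalIntegral.integral_sub (hKf hU x x 1) (hKf hV x x 1), hVW x hx]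
      simp only [W]
      ring
    intro x hx
    rw [← hUu x hx, sub_eq_zero.mp (hUV x hx), ← hWω x hx]
    refine congrArg (W x + ·) (intervalIntegral.integral_congr fun y hy => ?_)
    rw [uIcc_of_le hx.2] at hy
    simp only [hWω y ⟨hx.1.trans hy.1, hy.2⟩]
end
end
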